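/- arXiv:2205.04776 — 2 statements merged into one kernel-verified Lean document; each statement's English description precedes it below -/
import Mathlib

section
/- Every simplicial complex on vertex set [n] that is a cone and has exactly m facets (m ≥ 1) is (m+1)-Tverberg. -/
/-!
Put `d = m + 1` and let `v` be an apex of the cone. By Ramsey's theorem and the Plücker relations
(`exists_lacunary`, `exists_clusters`), any large set `P` in general position in `ℝ^d` contains
`d + 1 = m + 2` disjoint clusters, each as large as required, together with affine functionals
`G j` such that `∑ j, G j = 0` and `G j > 0` on every cluster but the `j`-th. As there are at least
`m` clusters, a facet `F j` can be assigned to each cluster `j` so that all facets occur.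

In every cluster find `n` disjoint parts whose convex hulls have a common point `q j` (`tverberg_pow`, a
weak form of Tverberg's theorem), and let `Q i` be the union of the `i`-th parts of those clusters
`j` with `i ∈ F j`. Every point of `P` that is left over is given to the apex `v`. For a face `σ`,
choose a facet `F j ⊇ σ`; then `q j` lies in the hulls of all `Q i`, `i ∈ σ`. If `σ` is not a face,
then for each `j` there is `i ∈ σ` outside `F j`. Since `v` belongs to all facets, `i ≠ v`, so
`Q i` avoids the `j`-th cluster and `G j > 0` on its hull. A common point of the hulls of all
`Q i`, `i ∈ σ`, would make every `G j` positive, contradicting `∑ j, G j = 0`.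

The functionals arise as follows. Consider the determinant of the lifts `(1, x)` of `d + 1` points
as a function of one of them. After passing to a homogeneous subsequence all determinants of
increasing tuples have the same sign, and all cross ratios of four points relative to `d - 1`
others lie on the same side of a threshold `ε`; by `cross_ratio_contra` they are small. Hence the
determinants `φ 0, …, φ d` with the variable point in successive positions have rapidly increasing
ratios, and positive rescaling makes `φ l` dominant on the `l`-th of `d + 1` consecutive blocks
(`exists_weights`). The functionals `G j = ∑ l, φ l - (d + 1) φ j` then have the stated signs.
-/

open Finset

/-- Points of `ℝ^d`. -/
abbrev Pt (d : ℕ) := Fin d → ℝ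

/-- `W` is a `d`-colorful word on alphabet `σ`: it has length `(d+1)(|σ|-1)+1`
(length `0` if `σ = ∅`), and each of the `d+1` blocks of consecutive positions
`i(|σ|-1), …, i(|σ|-1)+|σ|-1` (0-indexed, `0 ≤ i ≤ d`) contains every letter of `σ`
exactly once. -/
def IsColorfulWord {α : Type*} [DecidableEq α] (d : ℕ) (σ : Finset α) (W : List α) : Prop :=
  W.length = (d + 1) * (σ.card - 1) + min σ.card 1 ∧
    ∀ i ≤ d, ∀ a ∈ σ, ((W.drop (i * (σ.card - 1))).take σ.card).count a = 1

/-- `W` contains a `d`-colorful subword on alphabet `σ`. -/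
def ContainsColorful {α : Type*} [DecidableEq α] (d : ℕ) (σ : Finset α) (W : List α) : Prop :=
  ∃ W' : List α, W'.Sublist W ∧ IsColorfulWord d σ W'

/-- A complex `Δ` on vertex set `V` is `d`-colorfully representable. -/
def ColorfullyRep {V : Type*} [DecidableEq V] (d : ℕ) (Δ : Set (Finset V)) : Prop :=
  ∃ W : List V, ∀ σ : Finset V, σ ∈ Δ ↔ ContainsColorful d σ W

/-- A finite point set in `ℝ^d` is in general position: every subset of at most `d+1`
points is affinely independent. -/
def GenPos {d : ℕ} (P : Finset (Pt d)) : Prop :=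
  ∀ S : Finset (Pt d), S ⊆ P → S.card ≤ d + 1 →
    AffineIndependent ℝ (fun x : (S : Set (Pt d)) => (x : Pt d))

/-- Pairwise disjoint finite sets `Q 1, …, Q n` induce the complex `Δ`:
for every `σ ⊆ [n]`, the convex hulls of the `Q i`, `i ∈ σ`, have a common point
iff `σ ∈ Δ`. -/
def Induces {d n : ℕ} (Δ : Set (Finset (Fin n))) (Q : Fin n → Finset (Pt d)) : Prop :=
  (∀ i j : Fin n, i ≠ j → Disjoint (Q i) (Q j)) ∧
    ∀ σ : Finset (Fin n), (⋂ i ∈ σ, convexHull ℝ ((Q i : Set (Pt d)))).Nonempty ↔ σ ∈ Δ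

/-- `Δ` is weakly `d`-Tverberg. -/
def WeaklyTverberg (d : ℕ) {n : ℕ} (Δ : Set (Finset (Fin n))) : Prop :=
  ∃ C : ℕ, ∀ P : Finset (Pt d), GenPos P → C ≤ P.card →
    ∃ Q : Fin n → Finset (Pt d), (∀ i, Q i ⊆ P) ∧ Induces Δ Q

/-- `Δ` is `d`-Tverberg: the inducing sets can be chosen to partition all of `P`. -/
def IsTverberg (d : ℕ) {n : ℕ} (Δ : Set (Finset (Fin n))) : Prop :=
  ∃ C : ℕ, ∀ P : Finset (Pt d), GenPos P → C ≤ P.card →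
    ∃ Q : Fin n → Finset (Pt d), (∀ i, Q i ⊆ P) ∧ (∀ x ∈ P, ∃ i, x ∈ Q i) ∧ Induces Δ Q

/-- Strong general position. -/
def StrongGenPos {d : ℕ} (P : Finset (Pt d)) : Prop :=
  ∀ r : ℕ, 2 ≤ r → ∀ Q : Fin r → Finset (Pt d),
    (∀ i, Q i ⊆ P) → (∀ i, (Q i).Nonempty) →
    (∀ i j, i ≠ j → Disjoint (Q i) (Q j)) →
    (⨅ i, affineSpan ℝ ((Q i : Set (Pt d)))) = ⊥ ∨
      (Module.finrank ℝ (⨅ i, affineSpan ℝ ((Q i : Set (Pt d)))).direction : ℤ) =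
        (∑ i, (Module.finrank ℝ (affineSpan ℝ ((Q i : Set (Pt d)))).direction : ℤ)) -
          (d : ℤ) * ((r : ℤ) - 1)

/-- `σ` is a facet (maximal face) of `Δ`. -/
def IsFacet {n : ℕ} (Δ : Set (Finset (Fin n))) (σ : Finset (Fin n)) : Prop :=
  σ ∈ Δ ∧ ∀ τ ∈ Δ, σ ⊆ τ → σ = τ

/-- The simplicial complex associated to a graph: the empty set, the vertex singletons,
and the edges. -/
def graphComplex {V : Type*} (G : SimpleGraph V) : Set (Finset V) :=
  {σ : Finset V | σ.card ≤ 2 ∧ ∀ a ∈ σ, ∀ b ∈ σ, a ≠ b → G.Adj a b}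

/-- The disjoint subsequences of `p` indexed by `T` form a Tverberg partition. -/
def TvPt {d m r : ℕ} (p : Fin m → Pt d) (T : Fin r → Finset (Fin m)) : Prop :=
  (⋂ i : Fin r, convexHull ℝ (p '' (T i : Set (Fin m)))).Nonempty

/-- A minimal Tverberg partition: deleting any single point destroys the common point. -/
def MinTv {d m r : ℕ} (p : Fin m → Pt d) (T : Fin r → Finset (Fin m)) : Prop :=
  TvPt p T ∧ ∀ i : Fin r, ∀ x ∈ T i, ¬ TvPt p (fun j => (T j).erase x)

/-- The word on alphabet `{1,…,r}` associated to disjoint subsequences `T` of a sequence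
of length `m`: each index belonging to `T i` is replaced by the letter `i`, read in order. -/
noncomputable def assocWord {m r : ℕ} (T : Fin r → Finset (Fin m)) : List (Fin r) :=
  (List.finRange m).filterMap (fun k =>
    if h : ∃ i, k ∈ T i then some h.choose else none)

namespace ConeTverberg

/-! ### Ramsey's theorem for finite hypergraphs -/

/-- Ramsey's theorem for `r`-element subsets of a finite set of natural numbers, with finitely
many colours: a set of at least `N` elements contains a homogeneous subset of at least `M`
elements. -/
theorem ramsey {κ : Type*} [Finite κ] (r : ℕ) : ∀ M : ℕ, ∃ N : ℕ, ∀ (c : Finset ℕ → κ)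
    (S : Finset ℕ), N ≤ S.card →
    ∃ H ⊆ S, M ≤ H.card ∧ ∃ a, ∀ T ⊆ H, T.card = r → c T = a := by
  classical
  have := Fintype.ofFinite κ
  induction r with
  | zero =>
    intro M
    refine ⟨M, fun c S hS => ⟨S, Subset.rfl, hS, c ∅, fun T _ hT => ?_⟩⟩
    rw [Finset.card_eq_zero.mp hT]
  | succ r ih =>
    -- first make the colour of an `(r + 1)`-subset depend only on its least element
    have key : ∀ M : ℕ, ∃ N : ℕ, ∀ (c : Finset ℕ → κ) (S : Finset ℕ), N ≤ S.card →
        ∃ H ⊆ S, M ≤ H.card ∧ ∃ f : ℕ → κ, ∀ T ⊆ H, T.card = r + 1 →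
          ∀ a ∈ T, (∀ b ∈ T, a ≤ b) → c T = f a := by
      intro M
      induction M with
      | zero =>
        refine ⟨0, fun c S _ => ⟨∅, by simp, by simp, fun _ => c ∅, fun T hT hc => ?_⟩⟩
        rw [Finset.subset_empty.mp hT] at hc
        simp at hc
      | succ M ihM =>
        obtain ⟨N₁, h₁⟩ := ihM
        obtain ⟨N₂, h₂⟩ := ih N₁
        refine ⟨N₂ + 1, fun c S hS => ?_⟩
        have hne : S.Nonempty := Finset.card_pos.mp (by omega)
        set a := S.min' hne with ha
        have haS : a ∈ S := S.min'_mem hne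
        obtain ⟨S', hS'S, hS'c, k, hk⟩ := h₂ (fun T => c (insert a T)) (S.erase a)
          (by rw [Finset.card_erase_of_mem haS]; omega)
        obtain ⟨H, hHS', hHc, f, hf⟩ := h₁ c S' hS'c
        have hlt : ∀ b ∈ H, a < b := fun b hb => by
          have hb' := hS'S (hHS' hb)
          exact lt_of_le_of_ne (S.min'_le b (Finset.mem_of_mem_erase hb'))
            (Finset.ne_of_mem_erase hb').symm
        have haH : a ∉ H := fun h => lt_irrefl _ (hlt a h)
        refine ⟨insert a H, ?_, ?_, Function.update f a k, ?_⟩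
        · exact Finset.insert_subset haS
            ((hHS'.trans hS'S).trans (Finset.erase_subset _ _))
        · rw [Finset.card_insert_of_notMem haH]; omega
        · intro T hT hTc b hb hmin
          by_cases haT : a ∈ T
          · have hba : b = a := by
              rcases Finset.mem_insert.mp (hT hb) with h | h
              · exact h
              · exact absurd (hmin a haT) (not_le.mpr (hlt b h))
            rw [hba, Function.update_self]
            have := hk (T.erase a) (fun x hx => by
              rcases Finset.mem_insert.mp (hT (Finset.mem_of_mem_erase hx)) with h | h
              · exact absurd h (Finset.ne_of_mem_erase hx)
              · exact hHS' h) (by rw [Finset.card_erase_of_mem haT]; omega)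
            simpa [Finset.insert_erase haT] using this
          · have hTH : T ⊆ H := fun x hx => by
              rcases Finset.mem_insert.mp (hT hx) with h | h
              · exact absurd (h ▸ hx) haT
              · exact h
            rw [Function.update_of_ne (fun h : b = a => haT (h ▸ hb))]
            exact hf T hTH hTc b hb hmin
    intro M
    obtain ⟨N, hN⟩ := key (Fintype.card κ * M)
    refine ⟨N, fun c S hS => ?_⟩
    obtain ⟨H, hHS, hHc, f, hf⟩ := hN c S hS
    have hκ : Nonempty κ := ⟨c ∅⟩
    obtain ⟨k, -, hk⟩ := Finset.exists_le_card_fiber_of_mul_le_card_of_maps_to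
      (s := H) (t := (Finset.univ : Finset κ)) (f := f) (n := M)
      (fun _ _ => Finset.mem_univ _) ⟨hκ.some, Finset.mem_univ _⟩ (by simpa using hHc)
    refine ⟨H.filter (fun x => f x = k), (Finset.filter_subset _ _).trans hHS, hk, k, ?_⟩
    intro T hT hTc
    have hne : T.Nonempty := Finset.card_pos.mp (by omega)
    rw [hf T (hT.trans (Finset.filter_subset _ _)) hTc _ (T.min'_mem hne)
      (fun b hb => T.min'_le b hb)]
    exact (Finset.mem_filter.mp (hT (T.min'_mem hne))).2

/-- Ramsey's theorem for increasing tuples: a colouring of sequences that depends only on the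
first `r` entries is constant on the increasing `r`-tuples taken from the values of a suitable
increasing `g : {0, …, M - 1} → {0, …, N - 1}`. -/
theorem ramsey_seq {κ : Type*} [Finite κ] (r M : ℕ) : ∃ N : ℕ, ∀ c : (ℕ → ℕ) → κ,
    (∀ B B' : ℕ → ℕ, (∀ t < r, B t = B' t) → c B = c B') →
    ∃ g : ℕ → ℕ, (∀ i j, i < j → j < M → g i < g j) ∧ (∀ i < M, g i < N) ∧
      ∃ a, ∀ t : ℕ → ℕ, (∀ i j, i < j → j < r → t i < t j) → (∀ i < r, t i < M) →
        c (fun i => g (t i)) = a := by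
  classical
  obtain ⟨N, hN⟩ := ramsey (κ := κ) r M
  refine ⟨N, fun c hc => ?_⟩
  let enum : Finset ℕ → ℕ → ℕ := fun T i =>
    if h : i < T.card then T.orderEmbOfFin rfl ⟨i, h⟩ else 0
  obtain ⟨H, hHS, hHc, a, ha⟩ := hN (fun T => c (enum T)) (Finset.range N) (by simp)
  have hmono : ∀ i j, i < j → j < M → enum H i < enum H j := by
    intro i j hij hj
    simp only [enum, dif_pos (hij.trans (hj.trans_le hHc)), dif_pos (hj.trans_le hHc)]
    exact (H.orderEmbOfFin rfl).strictMono hij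
  have hmem : ∀ i < M, enum H i ∈ H := by
    intro i hi
    simp only [enum, dif_pos (hi.trans_le hHc)]
    exact H.orderEmbOfFin_mem rfl _
  refine ⟨enum H, hmono, fun i hi => Finset.mem_range.mp (hHS (hmem i hi)), a, ?_⟩
  intro t ht htM
  have hsm : StrictMono (fun i : Fin r => enum H (t i)) := fun i j hij =>
    hmono _ _ (ht i j hij j.2) (htM j j.2)
  set T : Finset ℕ := Finset.univ.image (fun i : Fin r => enum H (t i)) with hT
  have hTc : T.card = r := by
    rw [hT, Finset.card_image_of_injective _ hsm.injective]; simp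
  rw [← ha T (fun x hx => by
    obtain ⟨i, -, rfl⟩ := Finset.mem_image.mp hx
    exact hmem _ (htM i i.2)) hTc]
  refine hc _ _ fun i hi => ?_
  have h := Finset.orderEmbOfFin_unique hTc (f := fun i : Fin r => enum H (t i))
    (fun x => Finset.mem_image_of_mem _ (Finset.mem_univ x)) hsm
  have h' := congrFun h ⟨i, hi⟩
  simp only at h'
  rw [h']
  simp only [enum, dif_pos (hTc.symm ▸ hi : i < T.card)]
  exact Finset.orderEmbOfFin_eq_orderEmbOfFin_iff.2 rfl

/-! ### Weak Tverberg partitions -/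

/-- A weak form of Tverberg's theorem for `2 ^ s` parts. It follows from Radon's theorem by
induction: split the points into `d + 2` groups, partition each of them into `2 ^ s` parts with
a common point, and take a Radon partition of these `d + 2` common points. Then double the number
of parts by merging parts over either side of the Radon partition. The part of the point `y t` is
encoded by its colour `c t`. -/
theorem tverberg_pow {d : ℕ} (s : ℕ) : ∃ N : ℕ, ∀ y : Fin N → (Fin d → ℝ),
    ∃ (c : Fin N → ℕ) (p : Fin d → ℝ), ∀ i < 2 ^ s, p ∈ convexHull ℝ (y '' {t | c t = i}) := by
  classical
  induction s with
  | zero =>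
    refine ⟨1, fun y => ⟨fun _ => 0, y 0, fun i hi => subset_convexHull _ _ ?_⟩⟩
    have : i = 0 := by simpa using hi
    exact ⟨0, by simp [this], rfl⟩
  | succ s ih =>
    obtain ⟨N, hN⟩ := ih
    refine ⟨(d + 2) * N, fun y => ?_⟩
    let e : Fin (d + 2) × Fin N ≃ Fin ((d + 2) * N) := finProdFinEquiv
    choose c q hq using fun g : Fin (d + 2) => hN (fun t => y (e (g, t)))
    have hdep : ¬ AffineIndependent ℝ q := by
      intro h
      have := h.card_le_finrank_succ
      have h2 := Submodule.finrank_le (vectorSpan ℝ (Set.range q))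
      simp at this h2
      omega
    obtain ⟨I, p, hpI, hpJ⟩ := Convex.radon_partition hdep
    refine ⟨fun t => 2 * c (e.symm t).1 (e.symm t).2 + if (e.symm t).1 ∈ I then 1 else 0, p, ?_⟩
    intro i hi
    have hi2 : i / 2 < 2 ^ s := by rw [pow_succ] at hi; omega
    have main : ∀ J : Set (Fin (d + 2)), (∀ g ∈ J, (if g ∈ I then 1 else 0) = i % 2) →
        p ∈ convexHull ℝ (q '' J) → p ∈ convexHull ℝ (y '' {t |
          2 * c (e.symm t).1 (e.symm t).2 + (if (e.symm t).1 ∈ I then 1 else 0) = i}) := by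
      intro J hJ hp
      refine convexHull_min ?_ (convex_convexHull ℝ _) hp
      rintro _ ⟨g, hg, rfl⟩
      refine convexHull_mono ?_ (hq g (i / 2) hi2)
      rintro _ ⟨t, ht, rfl⟩
      refine ⟨e (g, t), ?_, rfl⟩
      have ht' : c g t = i / 2 := ht
      simp only [Set.mem_ofPred_eq, Equiv.symm_apply_apply, ht', hJ g hg]
      omega
    rcases Nat.mod_two_eq_zero_or_one i with h0 | h1
    · exact main Iᶜ (fun g hg => by rw [h0, if_neg hg]) hpJ
    · exact main I (fun g hg => by rw [h1, if_pos hg]) hpI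

/-! ### Plücker relations and cross ratios -/

/-- Signed volume of the parallelepiped spanned by `k` vectors of `ℝ^k`, as an alternating map. -/
noncomputable abbrev vol (k : ℕ) : (Fin k → ℝ) [⋀^Fin k]→ₗ[ℝ] ℝ := Matrix.detRowAlternating

open Matrix in
/-- The three-term Plücker relation: with all rows except those indexed by `p` and `q` fixed, the
determinant is an alternating form `ω` in the two remaining rows that factors through a
two-dimensional quotient. -/
theorem pluecker {k : ℕ} (c : Fin k → Fin k → ℝ) {p q : Fin k} (hpq : p ≠ q)
    (ω : (Fin k → ℝ) → (Fin k → ℝ) → ℝ)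
    (hω : ∀ x y, ω x y = vol k (Function.update (Function.update c p x) q y))
    (x y z w : Fin k → ℝ) :
    ω x y * ω z w + ω x w * ω y z = ω x z * ω y w := by
  classical
  have hswap : ∀ x y, ω x y = - ω y x := by
    intro x y
    rw [hω, hω, ← (vol k).map_swap _ hpq]
    congr 1
    funext t
    by_cases h1 : t = p
    · subst h1; simp [Function.update_of_ne hpq]
    · by_cases h2 : t = q
      · subst h2; simp [Function.update_of_ne hpq]
      · simp [Equiv.swap_apply_of_ne_of_ne h1 h2, Function.update_of_ne h1,
          Function.update_of_ne h2]
  let φ : (Fin k → ℝ) →ₗ[ℝ] ℝ :=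
    (vol k).toMultilinearMap.toLinearMap (Function.update c q w) p
  have hφ : ∀ u, φ u = ω u w := by
    intro u
    rw [hω, Function.update_comm hpq]
    rfl
  set A : Matrix (Fin k) (Fin k) ℝ :=
    Matrix.of (Function.update (Function.update c p x) q y) with hA
  have hrow : ∀ t, A t = Function.update (Function.update c p x) q y t := fun t => rfl
  -- Cramer's rule expands `z` in the rows of `A`; apply `φ` to that expansion
  have h := Matrix.mulVec_cramer Aᵀ z
  rw [Matrix.mulVec_transpose, Matrix.vecMul_eq_sum, Matrix.det_transpose] at h
  have h2 := congrArg φ h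
  have hzero : ∀ t, t ≠ p ∧ t ≠ q → φ (Aᵀ.cramer z t • A t) = 0 := by
    intro t ht
    have : ω (A t) w = 0 := by
      rw [hω]
      refine (vol k).map_eq_zero_of_eq _ (i := p) (j := t) ?_ ht.1.symm
      simp [hrow, Function.update_of_ne ht.1, Function.update_of_ne ht.2,
        Function.update_of_ne hpq]
    rw [map_smul, hφ, this, smul_zero]
  rw [map_sum, map_smul, Finset.sum_eq_add (a := p) (b := q) hpq
    (fun t _ ht => hzero t ht) (by simp) (by simp), map_smul, map_smul, hφ, hφ, hφ,
    Matrix.cramer_transpose_apply, Matrix.cramer_transpose_apply] at h2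
  have e1 : A p = x := by simp [hrow, Function.update_of_ne hpq]
  have e2 : A q = y := by simp [hrow]
  have e3 : (A.updateRow p z).det = ω z y := by
    rw [hω, ← Function.update_idem x z c, Function.update_comm hpq]
    rfl
  have e4 : (A.updateRow q z).det = ω x z := by
    rw [hω]
    change vol k (Function.update (Function.update (Function.update c p x) q y) q z) = _
    rw [Function.update_idem]
  have e5 : A.det = ω x y := by rw [hω]; rfl
  rw [e1, e2, e3, e4, e5, hswap z y] at h2
  simp only [smul_eq_mul] at h2
  linarith

/-- The numbers `ω i j` behave like positive `2 × 2` minors of `n + 4` vectors in the plane. Then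
it is impossible that the cross ratio `ω i j * ω l m / (ω i l * ω j m)` exceeds `ε` for every
increasing quadruple. Indeed, large cross ratios force the affine coordinates of the points to
grow geometrically, so that the cross ratio of `1, 2, n + 2, n + 3` drops below `ε`. -/
theorem cross_ratio_contra {ε : ℝ} (hε : 0 < ε) (hε1 : ε < 1) {n : ℕ} (hn : (1 - ε) ^ n < ε)
    (ω : ℕ → ℕ → ℝ)
    (hpos : ∀ i j, i < j → j < n + 4 → 0 < ω i j)
    (hpl : ∀ i j l m, ω i j * ω l m + ω i m * ω j l = ω i l * ω j m)
    (hbig : ∀ i j l m, i < j → j < l → l < m → m < n + 4 →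
      ε * (ω i l * ω j m) < ω i j * ω l m) : False := by
  -- `ω 1 t / ω 0 t` is the affine coordinate with the zeroth point at infinity
  have step : ∀ l, 2 ≤ l → l + 1 < n + 4 →
      ω 1 l / ω 0 l ≤ (1 - ε) * (ω 1 (l + 1) / ω 0 (l + 1)) := by
    intro l hl hl1
    have h0l := hpos 0 l (by omega) (by omega)
    have h0m := hpos 0 (l + 1) (by omega) hl1
    rw [← mul_div_assoc, div_le_div_iff₀ h0l h0m]
    have := hbig 0 1 l (l + 1) (by omega) (by omega) (by omega) hl1
    have := hpl 0 1 l (l + 1)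
    nlinarith
  have grow : ∀ t, t ≤ n → ω 1 2 / ω 0 2 ≤ (1 - ε) ^ t * (ω 1 (2 + t) / ω 0 (2 + t)) := by
    intro t
    induction t with
    | zero => intro _; simp
    | succ t ih =>
      intro ht
      refine (ih (by omega)).trans ?_
      rw [pow_succ, mul_assoc]
      exact mul_le_mul_of_nonneg_left (step (2 + t) (by omega) (by omega))
        (pow_nonneg (by linarith) _)
  have hg := grow n le_rfl
  set l := 2 + n with hl
  have p02 := hpos 0 2 (by omega) (by omega)
  have p0l := hpos 0 l (by omega) (by omega)
  have p1l := hpos 1 l (by omega) (by omega)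
  have p12 := hpos 1 2 (by omega) (by omega)
  have p2m := hpos 2 (l + 1) (by omega) (by omega)
  have plm := hpos l (l + 1) (by omega) (by omega)
  rcases Nat.eq_zero_or_pos n with h0 | hn0
  · -- for `n = 0` the hypothesis `hn` reads `1 < ε`
    subst h0; simp at hn; linarith
  have p0m := hpos 0 (l + 1) (by omega) (by omega)
  have p2l := hpos 2 l (by omega) (by omega)
  have hb := hbig 1 2 l (l + 1) (by omega) (by omega) (by omega) (by omega)
  have hp := hpl 0 2 l (l + 1)
  rw [← mul_div_assoc, div_le_div_iff₀ p02 p0l] at hg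
  -- the cross ratio of `0, 2, l, l + 1` is less than one
  have h1 : ω 0 2 * ω l (l + 1) ≤ ω 0 l * ω 2 (l + 1) := by nlinarith [mul_pos p0m p2l]
  have h2 : ω 1 2 * ω 0 l ≤ ε * ω 1 l * ω 0 2 := by
    refine hg.trans (mul_le_mul_of_nonneg_right
      (mul_le_mul_of_nonneg_right hn.le p1l.le) p02.le)
  have h3 : ω 1 2 * ω l (l + 1) * ω 0 l ≤ ε * (ω 1 l * ω 2 (l + 1)) * ω 0 l :=
    calc ω 1 2 * ω l (l + 1) * ω 0 l = (ω 1 2 * ω 0 l) * ω l (l + 1) := by ring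
      _ ≤ (ε * ω 1 l * ω 0 2) * ω l (l + 1) := mul_le_mul_of_nonneg_right h2 plm.le
      _ = ε * ω 1 l * (ω 0 2 * ω l (l + 1)) := by ring
      _ ≤ ε * ω 1 l * (ω 0 l * ω 2 (l + 1)) :=
          mul_le_mul_of_nonneg_left h1 (mul_nonneg hε.le p1l.le)
      _ = _ := by ring
  exact absurd (le_of_mul_le_mul_right h3 p0l) (not_le.mpr hb)

/-! ### Separating clusters by linear functionals -/

/-- Cut `{0, …, k (R + 1) - 1}` into `k` consecutive blocks of length `R + 1`. If every ratio
`f (a + 1) / f a` is positive and grows at least by the factor `1 / ε` at each step, then the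
functions `f a` can be rescaled so that on the `l`-th block, its last element excepted, the `l`-th
one dominates all others by the factor `1 / ε`. The weights are chosen such that `w a * f a` and
`w (a + 1) * f (a + 1)` agree at the last element of the block `a`. -/
theorem exists_weights {ε : ℝ} (hε1 : ε ≤ 1) (k R : ℕ) (f : ℕ → ℕ → ℝ)
    (hpos : ∀ a < k, ∀ x < k * (R + 1), 0 < f a x)
    (hlac : ∀ a, a + 1 < k → ∀ x z, x < z → z < k * (R + 1) →
      f (a + 1) x * f a z ≤ ε * (f (a + 1) z * f a x)) :
    ∃ w : ℕ → ℝ, ∀ l < k, ∀ r < R, (∀ i < k, 0 < w i * f i (l * (R + 1) + r)) ∧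
      ∀ j < k, j ≠ l → w j * f j (l * (R + 1) + r) ≤ ε * (w l * f l (l * (R + 1) + r)) := by
  let piv : ℕ → ℕ := fun a => a * (R + 1) + R
  let w : ℕ → ℝ := fun a => Nat.rec 1 (fun a v => v * f a (piv a) / f (a + 1) (piv a)) a
  have hws : ∀ a, w (a + 1) = w a * f a (piv a) / f (a + 1) (piv a) := fun a => rfl
  have hblk : ∀ l < k, ∀ r ≤ R, l * (R + 1) + r < k * (R + 1) := by
    intro l hl r hr
    have : (l + 1) * (R + 1) ≤ k * (R + 1) := Nat.mul_le_mul_right _ hl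
    nlinarith
  have hw : ∀ a < k, 0 < w a := by
    intro a
    induction a with
    | zero => intro _; exact one_pos
    | succ a ih =>
      intro ha
      rw [hws]
      have hp := hblk a (by omega) R le_rfl
      exact div_pos (mul_pos (ih (by omega)) (hpos a (by omega) _ hp)) (hpos _ ha _ hp)
  -- before the pivot the lower index dominates, after it the higher one
  have hbefore : ∀ a, a + 1 < k → ∀ x < piv a,
      w (a + 1) * f (a + 1) x ≤ ε * (w a * f a x) := by
    intro a ha x hx
    have hp := hblk a (by omega) R le_rfl
    have hz := hpos (a + 1) ha _ hp
    rw [hws, div_mul_eq_mul_div, div_le_iff₀ hz]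
    have := mul_le_mul_of_nonneg_left (hlac a ha x (piv a) hx hp) (hw a (by omega)).le
    calc _ = w a * (f (a + 1) x * f a (piv a)) := by ring
      _ ≤ _ := this
      _ = _ := by ring
  have hafter : ∀ a, a + 1 < k → ∀ x, piv a < x → x < k * (R + 1) →
      w a * f a x ≤ ε * (w (a + 1) * f (a + 1) x) := by
    intro a ha x hx hxk
    have hp := hblk a (by omega) R le_rfl
    have hz := hpos (a + 1) ha _ hp
    rw [hws, div_mul_eq_mul_div, ← mul_div_assoc, le_div_iff₀ hz]
    have := mul_le_mul_of_nonneg_left (hlac a ha (piv a) x hx hxk) (hw a (by omega)).le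
    calc _ = w a * (f (a + 1) (piv a) * f a x) := by ring
      _ ≤ _ := this
      _ = _ := by ring
  refine ⟨w, fun l hl r hr => ?_⟩
  set x := l * (R + 1) + r with hx
  have hxk := hblk l hl r hr.le
  have hg : ∀ a < k, 0 < w a * f a x := fun a ha => mul_pos (hw a ha) (hpos a ha x hxk)
  refine ⟨hg, fun j hj hjl => ?_⟩
  have shrink : ∀ a < k, ε * (w a * f a x) ≤ w a * f a x := fun a ha => by
    nlinarith [hg a ha]
  have up : ∀ t, l + t + 1 < k → w (l + t + 1) * f (l + t + 1) x ≤ ε * (w l * f l x) := by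
    intro t
    induction t with
    | zero => exact fun h => hbefore l h x (by simp only [piv]; omega)
    | succ t ih =>
      intro h
      have h1 := hbefore (l + t + 1) h x (by
        simp only [piv, hx]
        have : l * (R + 1) ≤ (l + t + 1) * (R + 1) := Nat.mul_le_mul_right _ (by omega)
        omega)
      exact h1.trans ((shrink (l + t + 1) (by omega)).trans (ih (by omega)))
  have down : ∀ t, t + 1 ≤ l → w (l - t - 1) * f (l - t - 1) x ≤ ε * (w l * f l x) := by
    have hpiv : ∀ a, a < l → piv a < x := by
      intro a ha
      have : (a + 1) * (R + 1) ≤ l * (R + 1) := Nat.mul_le_mul_right _ ha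
      simp only [piv, hx]
      nlinarith
    intro t
    induction t with
    | zero =>
      intro h
      have := hafter (l - 1) (by omega) x (hpiv _ (by omega)) hxk
      rwa [Nat.sub_add_cancel h] at this
    | succ t ih =>
      intro h
      have h1 := hafter (l - (t + 1) - 1) (by omega) x (hpiv _ (by omega)) hxk
      rw [show l - (t + 1) - 1 + 1 = l - t - 1 by omega] at h1
      exact h1.trans ((shrink _ (by omega)).trans (ih (by omega)))
  rcases lt_or_gt_of_ne hjl with h | h
  · have := down (l - j - 1) (by omega)
    rwa [show l - (l - j - 1) - 1 = j by omega] at this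
  · have := up (j - l - 1) (by omega)
    rwa [show l + (j - l - 1) + 1 = j by omega] at this

/-- The index tuple `c` with the entries at positions `a` and `a + 1` replaced by `x`
and `y`. -/
def twoSlot (c : ℕ → ℕ) (a x y : ℕ) : ℕ → ℕ :=
  fun t => if t = a then x else if t = a + 1 then y else c t

/-- The index tuple `0, …, a - 1, x, k + L + a + 1, k + L + a + 2, …`. The entry `x` at
position `a` is the variable one; for `k ≤ x < k + L` the tuple is increasing on its first `k`
entries. -/
def oneSlot (k L a x : ℕ) : ℕ → ℕ := fun t => if t < a then t else if t = a then x else k + L + t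

/-- Let `V` be a function of index tuples of length `k` that is positive on increasing tuples and
satisfies the three-term Plücker relations in adjacent positions, such as a volume. On a suitable
subsequence the functions `f a : x ↦ V (0, …, a - 1, x, k + L + a + 1, …)` have ratios
`f (a + 1) / f a` that grow at least by the factor `1 / ε` at each step. By Ramsey's theorem it is
either true for all increasing quadruples or for none that the cross ratio in the positions
`a, a + 1` is at most `ε`, and `cross_ratio_contra` rules out the second possibility. -/
theorem exists_lacunary {ε : ℝ} (hε : 0 < ε) (hε1 : ε < 1) {n : ℕ} (hn : (1 - ε) ^ n < ε)
    (k L : ℕ) (hL : n + 4 ≤ L) :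
    ∃ N : ℕ, ∀ V : (ℕ → ℕ) → ℝ, (∀ B B' : ℕ → ℕ, (∀ t < k, B t = B' t) → V B = V B') →
      (∀ t : ℕ → ℕ, (∀ i j, i < j → j < k → t i < t j) → (∀ i < k, t i < N) → 0 < V t) →
      (∀ c a, a + 1 < k → ∀ x y z w,
        V (twoSlot c a x y) * V (twoSlot c a z w) + V (twoSlot c a x w) * V (twoSlot c a y z) =
          V (twoSlot c a x z) * V (twoSlot c a y w)) →
      ∃ g : ℕ → ℕ, (∀ i j, i < j → j < 2 * k + L → g i < g j) ∧ (∀ i < 2 * k + L, g i < N) ∧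
        ∀ a, a + 1 < k → ∀ x z, k ≤ x → x < z → z < k + L →
          V (g ∘ oneSlot k L (a + 1) x) * V (g ∘ oneSlot k L a z) ≤
            ε * (V (g ∘ oneSlot k L (a + 1) z) * V (g ∘ oneSlot k L a x)) := by
  obtain ⟨N, hN⟩ := ramsey_seq (κ := Fin k → Prop) (k + 2) (2 * k + L)
  refine ⟨N, fun V hloc hpos hpl => ?_⟩
  -- a `(k + 2)`-tuple carries, for each `a`, four points at the positions `a, …, a + 3` and a
  -- context `cc` formed by the other entries
  let cc : (ℕ → ℕ) → ℕ → ℕ → ℕ := fun B a t => if t < a then B t else B (t + 2)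
  let U : (ℕ → ℕ) → ℕ → ℕ → ℕ → ℝ := fun B a i j => V (twoSlot (cc B a) a (B (a + i)) (B (a + j)))
  obtain ⟨g, hg, hgN, A, hA⟩ := hN (fun B a => (a : ℕ) + 1 < k →
    U B a 0 1 * U B a 2 3 ≤ ε * (U B a 0 2 * U B a 1 3)) (by
      intro B B' hB
      funext a
      by_cases ha : (a : ℕ) + 1 < k
      · have key : ∀ i < 4, ∀ j < 4, U B a i j = U B' a i j := by
          intro i hi j hj
          refine hloc _ _ fun t ht => ?_
          simp only [twoSlot, cc]
          split_ifs <;> exact hB _ (by omega)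
        rw [key 0 (by omega) 1 (by omega), key 2 (by omega) 3 (by omega),
          key 0 (by omega) 2 (by omega), key 1 (by omega) 3 (by omega)]
      · simp [ha])
  refine ⟨g, hg, hgN, ?_⟩
  have hpos' : ∀ t : ℕ → ℕ, (∀ i j, i < j → j < k → t i < t j) →
      (∀ i < k, t i < 2 * k + L) → 0 < V (g ∘ t) := fun t ht htM =>
    hpos _ (fun i j hij hj => hg _ _ (ht i j hij hj) (htM j hj)) (fun i hi => hgN _ (htM i hi))
  intro a ha
  set c₀ : ℕ → ℕ := fun t => if t < a then t else k + L + t with hc₀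
  let ω : ℕ → ℕ → ℝ := fun x y => V (g ∘ twoSlot c₀ a x y)
  have hom : ∀ p₀ p₁ p₂ p₃, a ≤ p₀ → p₀ < p₁ → p₁ < p₂ → p₂ < p₃ → p₃ < k + L + a + 2 →
      ((ω p₀ p₁ * ω p₂ p₃ ≤ ε * (ω p₀ p₂ * ω p₁ p₃)) ↔ A ⟨a, by omega⟩) := by
    intro p₀ p₁ p₂ p₃ h0 h1 h2 h3 h4
    let τ : ℕ → ℕ := fun s => if s < a then s else if s = a then p₀ else if s = a + 1 then p₁
      else if s = a + 2 then p₂ else if s = a + 3 then p₃ else k + L + s - 2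
    have e := congrFun (hA τ (by intro i j hij hj; simp only [τ]; split_ifs <;> omega)
      (by intro i hi; simp only [τ]; split_ifs <;> omega)) ⟨a, by omega⟩
    have t0 : τ (a + 0) = p₀ := by simp [τ]
    have t1 : τ (a + 1) = p₁ := by simp [τ]
    have t2 : τ (a + 2) = p₂ := by simp [τ]
    have t3 : τ (a + 3) = p₃ := by simp [τ]
    have hU : ∀ i j, U (fun s => g (τ s)) a i j = ω (τ (a + i)) (τ (a + j)) := by
      intro i j
      simp only [U, ω]
      congr 1
      funext t
      simp only [twoSlot, cc, hc₀, Function.comp]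
      split_ifs with h1 h2 h3
      · rfl
      · rfl
      · simp only [τ, if_pos h3]
      · congr 1
        simp only [τ]
        split_ifs <;> omega
    simp only [hU, t0, t1, t2, t3] at e
    rw [← e]
    exact ⟨fun h _ => h, fun h => h ha⟩
  have hωpos : ∀ x y, a ≤ x → x < y → y < k + L + a + 2 → 0 < ω x y := by
    intro x y h0 h1 h2
    refine hpos' _ ?_ ?_
    · intro i j hij hj; simp only [twoSlot, hc₀]; split_ifs <;> omega
    · intro i hi; simp only [twoSlot, hc₀]; split_ifs <;> omega
  have hωpl : ∀ i j l m, ω i j * ω l m + ω i m * ω j l = ω i l * ω j m := by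
    intro i j l m
    have hcomp : ∀ x y, ω x y = V (twoSlot (g ∘ c₀) a (g x) (g y)) := by
      intro x y
      simp only [ω]
      congr 1
      funext t
      simp only [twoSlot, Function.comp]
      split_ifs <;> rfl
    simp only [hcomp]
    exact hpl _ _ ha _ _ _ _
  -- the `a`-th cross ratios are small
  have hAa : A ⟨a, by omega⟩ := by
    by_contra hneg
    refine cross_ratio_contra hε hε1 hn (fun i j => ω (k + i) (k + j)) ?_ ?_ ?_
    · intro i j hij hj
      exact hωpos _ _ (by omega) (by omega) (by omega)
    · intro i j l m
      exact hωpl _ _ _ _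
    · intro i j l m hij hjl hlm hm
      exact not_le.mp fun h => hneg ((hom _ _ _ _ (by omega) (by omega) (by omega) (by omega)
        (by omega)).mp h)
  intro x z hkx hxz hz
  -- the four points are `a < x < z < k + L + a + 1`
  have h := (hom a x z (k + L + a + 1) le_rfl (by omega) hxz (by omega) (by omega)).mpr hAa
  have e1 : ∀ y, ω a y = V (g ∘ oneSlot k L (a + 1) y) := by
    intro y
    simp only [ω]
    congr 2
    funext t
    simp only [twoSlot, oneSlot, hc₀]
    split_ifs <;> omega
  have e2 : ∀ y, ω y (k + L + a + 1) = V (g ∘ oneSlot k L a y) := by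
    intro y
    simp only [ω]
    congr 2
    funext t
    simp only [twoSlot, oneSlot, hc₀]
    split_ifs <;> omega
  rwa [e1, e1, e2, e2] at h

/-- A long sequence of vectors in `ℝ^k`, any `k` of them independent, contains `k` disjoint
clusters `K l` of size `R` and linear functionals `G j` summing to zero such that `G j` is positive
on all clusters except possibly `K j`. Applied to lifted points, this says that the convex
hulls of the unions of all but one cluster have no common point.

With `φ a` the functionals `x ↦ vol (…, x, …)`, rescaled by `exists_weights` so that `φ l`
dominates on the cluster `K l`, one takes `G j = ∑ l, φ l - k • φ j`. -/
theorem exists_clusters (k R : ℕ) : ∃ N : ℕ, ∀ X : ℕ → (Fin k → ℝ),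
    (∀ t : ℕ → ℕ, (∀ i j, i < j → j < k → t i < t j) → (∀ i < k, t i < N) →
      vol k (fun i => X (t i)) ≠ 0) →
    ∃ (K : Fin k → Fin R → ℕ) (G : Fin k → (Fin k → ℝ) →ₗ[ℝ] ℝ),
      (∀ l r, K l r < N) ∧ (∀ l r l' r', K l r = K l' r' → l = l' ∧ r = r') ∧
      (∀ v, ∑ j, G j v = 0) ∧ ∀ j l r, j ≠ l → 0 < G j (X (K l r)) := by
  classical
  set ε : ℝ := 1 / (k + 2) with hεdef
  have hk2 : (0 : ℝ) < k + 2 := by positivity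
  have hε : 0 < ε := by positivity
  have hε1 : ε < 1 := by rw [hεdef, div_lt_one hk2]; linarith [(Nat.cast_nonneg k : (0 : ℝ) ≤ k)]
  have hkε : k * ε < 1 := by rw [hεdef, mul_one_div, div_lt_one hk2]; linarith
  obtain ⟨n, hn⟩ := exists_pow_lt_of_lt_one hε (show 1 - ε < 1 by linarith)
  set L := n + 4 + k * (R + 1) with hL
  obtain ⟨N₂, h₂⟩ := exists_lacunary hε hε1 hn k L (by omega)
  obtain ⟨N, h₁⟩ := ramsey_seq (κ := Prop) k N₂
  refine ⟨N, fun X hX => ?_⟩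
  obtain ⟨g₁, hg₁, hg₁N, A, hA⟩ := h₁ (fun B => 0 < vol k (fun i => X (B i))) (by
    intro B B' hB
    simp only [hB _ (Fin.is_lt _)])
  -- `σ` is the common sign of the volumes of increasing tuples
  obtain ⟨σ, hσ2, hσ⟩ : ∃ σ : ℝ, σ * σ = 1 ∧ ∀ t : ℕ → ℕ, (∀ i j, i < j → j < k → t i < t j) →
      (∀ i < k, t i < N₂) → 0 < σ * vol k (fun i => X (g₁ (t i))) := by
    by_cases hAt : A
    · refine ⟨1, by norm_num, fun t ht htN => ?_⟩
      rw [one_mul]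
      exact (hA t ht htN).mpr hAt
    · refine ⟨-1, by norm_num, fun t ht htN => ?_⟩
      have h1 : ¬ 0 < vol k (fun i => X (g₁ (t i))) := fun h => hAt ((hA t ht htN).mp h)
      have h2 := hX (fun i => g₁ (t i)) (fun i j hij hj => hg₁ _ _ (ht i j hij hj) (htN j hj))
        (fun i hi => hg₁N _ (htN i hi))
      have h3 := lt_of_le_of_ne (not_lt.mp h1) h2
      linarith
  let V : (ℕ → ℕ) → ℝ := fun B => σ * vol k (fun i => X (g₁ (B i)))
  obtain ⟨g, hg, hgN, hlac⟩ := h₂ V (by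
      intro B B' hB
      simp only [V, hB _ (Fin.is_lt _)]) hσ (by
      intro c a ha x y z w
      have hV : ∀ x y, V (twoSlot c a x y) = σ * vol k (Function.update (Function.update
          (fun t : Fin k => X (g₁ (c t))) ⟨a, by omega⟩ (X (g₁ x))) ⟨a + 1, ha⟩ (X (g₁ y))) := by
        intro x y
        simp only [V]
        congr 2
        funext t
        simp only [twoSlot, Function.update_apply, Fin.ext_iff]
        split_ifs <;> first | rfl | omega
      have := pluecker (fun t : Fin k => X (g₁ (c t)))
        (p := ⟨a, by omega⟩) (q := ⟨a + 1, ha⟩) (by simp [Fin.ext_iff]) _ (fun _ _ => rfl)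
        (X (g₁ x)) (X (g₁ y)) (X (g₁ z)) (X (g₁ w))
      simp only [hV]
      linear_combination (σ * σ) * this)
  let Y : ℕ → (Fin k → ℝ) := fun s => X (g₁ (g s))
  obtain ⟨w, hw⟩ := exists_weights hε1.le k R (fun a x => V (g ∘ oneSlot k L a (k + x)))
    (by
      intro a ha x hx'
      refine hσ _ ?_ ?_
      · intro i j hij hj
        refine hg _ _ ?_ ?_ <;> simp only [oneSlot] <;> split_ifs <;> omega
      · intro i hi
        refine hgN _ ?_
        simp only [oneSlot]; split_ifs <;> omega)
    (by
      intro a ha x z hxz hz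
      exact hlac a ha _ _ (by omega) (by omega) (by omega))
  -- `toLinearMap` overwrites the row `a`, so the index `0` given to it here is irrelevant
  let φ : Fin k → (Fin k → ℝ) →ₗ[ℝ] ℝ := fun a => (w a * σ) •
    (vol k).toMultilinearMap.toLinearMap (fun t : Fin k => Y (oneSlot k L a 0 t)) a
  have hφ : ∀ (a : Fin k) x, φ a (Y x) = w a * V (g ∘ oneSlot k L a x) := by
    intro a x
    change (w a * σ) * vol k (Function.update _ a (Y x)) = w a * (σ * vol k _)
    rw [mul_assoc]
    congr 3
    funext t
    simp only [Function.update_apply, Fin.ext_iff, Function.comp, oneSlot, Y]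
    split_ifs <;> first | rfl | omega
  have hblk : ∀ (l : Fin k) (r : Fin R), (l : ℕ) * (R + 1) + r < k * (R + 1) := by
    intro l r
    have : ((l : ℕ) + 1) * (R + 1) ≤ k * (R + 1) := Nat.mul_le_mul_right _ l.2
    nlinarith [r.2]
  let s : Fin k → Fin R → ℕ := fun l r => k + (l * (R + 1) + r)
  have hs : ∀ l r, s l r < 2 * k + L := fun l r => by
    have := hblk l r
    simp only [s]; omega
  have hmono : ∀ i j, i < j → j < 2 * k + L → g₁ (g i) < g₁ (g j) := fun i j hij hj =>
    hg₁ _ _ (hg i j hij hj) (hgN j hj)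
  refine ⟨fun l r => g₁ (g (s l r)), fun j => (∑ l, φ l) - (k : ℝ) • φ j,
    fun l r => hg₁N _ (hgN _ (hs l r)), ?_, ?_, ?_⟩
  · intro l r l' r' h
    have hss : s l r = s l' r' := by
      rcases lt_trichotomy (s l r) (s l' r') with h1 | h1 | h1
      · exact absurd h (hmono _ _ h1 (hs _ _)).ne
      · exact h1
      · exact absurd h (hmono _ _ h1 (hs _ _)).ne'
    have h1 : (l : ℕ) * (R + 1) + r = l' * (R + 1) + r' := by simp only [s] at hss; omega
    have hr : (r : ℕ) < R + 1 := by omega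
    have hr' : (r' : ℕ) < R + 1 := by omega
    have h2 : (l : ℕ) = l' := by
      have := congrArg (· / (R + 1)) h1
      simpa [Nat.mul_add_div, Nat.add_comm, Nat.add_mul_div_right, Nat.div_eq_of_lt hr,
        Nat.div_eq_of_lt hr', Nat.add_div_of_dvd_right] using this
    rw [h2] at h1
    exact ⟨Fin.ext h2, Fin.ext (by omega)⟩
  · intro v
    simp [LinearMap.sum_apply, Finset.sum_sub_distrib, Finset.mul_sum]
  · intro j l r hjl
    change 0 < ((∑ l, φ l) - (k : ℝ) • φ j) (Y (s l r))
    obtain ⟨hpos, hdom⟩ := hw l l.2 r r.2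
    have hl := hpos l l.2
    have hj := hdom j j.2 (fun h => hjl (Fin.ext h))
    have hnn : ∀ i : Fin k, 0 ≤ φ i (Y (s l r)) := by
      intro i
      rw [hφ]
      exact (hpos i i.2).le
    have hsum : φ l (Y (s l r)) ≤ ∑ i, φ i (Y (s l r)) :=
      Finset.single_le_sum (fun i _ => hnn i) (Finset.mem_univ l)
    simp only [LinearMap.sub_apply, LinearMap.sum_apply, LinearMap.smul_apply, smul_eq_mul]
    have hj' : φ j (Y (s l r)) ≤ ε * φ l (Y (s l r)) := by rw [hφ, hφ]; exact hj
    have hl' : 0 < φ l (Y (s l r)) := by rw [hφ]; exact hl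
    have : k * φ j (Y (s l r)) ≤ k * (ε * φ l (Y (s l r))) :=
      mul_le_mul_of_nonneg_left hj' (Nat.cast_nonneg k)
    nlinarith

/-! ### Points in general position, and facets -/

/-- The homogeneous lift `x ↦ (1, x)`. -/
def lift {d : ℕ} (x : Pt d) : Fin (d + 1) → ℝ := Fin.cons 1 x

theorem lift_combo {d : ℕ} {a b : ℝ} (hab : a + b = 1) (x y : Pt d) :
    lift (a • x + b • y) = a • lift x + b • lift y := by
  funext i
  refine Fin.cases ?_ (fun i => ?_) i <;> simp [lift, hab]

theorem convex_pos_lift {d : ℕ} (G : (Fin (d + 1) → ℝ) →ₗ[ℝ] ℝ) :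
    Convex ℝ {x : Pt d | 0 < G (lift x)} := by
  intro x hx y hy a b ha hb hab
  simp only [Set.mem_ofPred_eq] at hx hy ⊢
  rw [lift_combo hab, map_add, map_smul, map_smul, smul_eq_mul, smul_eq_mul]
  rcases ha.eq_or_lt with rfl | ha
  · rw [zero_add] at hab
    subst hab
    simpa using hy
  · have := mul_pos ha hx
    have := mul_nonneg hb hy.le
    linarith

/-- In general position, any `d + 1` distinct points have linearly independent lifts. -/
theorem vol_lift_ne_zero {d : ℕ} {P : Finset (Pt d)} (hP : GenPos P) (p : Fin (d + 1) → Pt d)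
    (hinj : Function.Injective p) (hmem : ∀ i, p i ∈ P) :
    vol (d + 1) (fun i => lift (p i)) ≠ 0 := by
  classical
  have hS := hP (univ.image p) (by intro x hx; simp at hx; obtain ⟨i, rfl⟩ := hx; exact hmem i)
    (by simpa using Finset.card_image_le (s := univ) (f := p))
  have haff : AffineIndependent ℝ p := by
    let e : Fin (d + 1) ↪ (((univ.image p : Finset (Pt d)) : Set (Pt d))) :=
      ⟨fun i => ⟨p i, by simp⟩, fun i j h => hinj (congrArg Subtype.val h)⟩
    exact hS.comp_embedding e
  intro h0
  obtain ⟨w, hw0, hw⟩ := Matrix.exists_vecMul_eq_zero_iff.mpr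
    (show Matrix.det (Matrix.of fun i => lift (p i)) = 0 from h0)
  apply hw0
  have hcoord : ∀ j, ∑ i, w i * lift (p i) j = 0 := fun j => congrFun hw j
  funext i
  refine affineIndependent_iff.mp haff univ w ?_ ?_ i (mem_univ i)
  · simpa [lift] using hcoord 0
  · funext j
    simpa [lift, Finset.sum_apply] using hcoord j.succ

theorem exists_facet_superset {n : ℕ} (Δ : Set (Finset (Fin n))) {σ : Finset (Fin n)}
    (hσ : σ ∈ Δ) : ∃ τ, IsFacet Δ τ ∧ σ ⊆ τ := by
  obtain ⟨τ, hστ, hτ⟩ := (Set.toFinite Δ).exists_le_maximal hσ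
  exact ⟨τ, ⟨hτ.1, fun ρ hρ h => le_antisymm h (hτ.2 hρ h)⟩, hστ⟩

/-- The facets can be assigned to `m + 2` clusters so that each facet occurs; `m + 2` is the number
of clusters available in dimension `m + 1`. -/
theorem exists_facet_cover {n m : ℕ} (hm : 1 ≤ m) (Δ : Set (Finset (Fin n)))
    (hfac : {σ : Finset (Fin n) | IsFacet Δ σ}.ncard = m) :
    ∃ F : Fin (m + 2) → Finset (Fin n), (∀ j, IsFacet Δ (F j)) ∧
      ∀ τ, IsFacet Δ τ → ∃ j, F j = τ := by
  have e := Finite.equivFinOfCardEq (α := {σ : Finset (Fin n) | IsFacet Δ σ}) hfac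
  refine ⟨fun j => (e.symm ⟨min j (m - 1), by omega⟩).1,
    fun j => (e.symm _).2, fun τ hτ => ⟨⟨e ⟨τ, hτ⟩, by omega⟩, ?_⟩⟩
  have : (⟨min (e ⟨τ, hτ⟩ : ℕ) (m - 1), by omega⟩ : Fin m) = e ⟨τ, hτ⟩ := by
    ext
    simp only
    omega
  simp only [this, Equiv.symm_apply_apply]

theorem exists_enum {d : ℕ} (P : Finset (Pt d)) : ∃ pts : ℕ → Pt d,
    (∀ i < P.card, pts i ∈ P) ∧ ∀ i < P.card, ∀ j < P.card, pts i = pts j → i = j := by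
  refine ⟨fun i => if h : i < P.card then (P.equivFin.symm ⟨i, h⟩ : Pt d) else 0, ?_, ?_⟩
  · intro i hi
    simp [hi]
  · intro i hi j hj h
    simp only [hi, hj, dif_pos] at h
    simpa using P.equivFin.symm.injective (Subtype.ext h)

end ConeTverberg

theorem statement14 (n m : ℕ) (hm : 1 ≤ m) (Δ : Set (Finset (Fin n)))
    (hΔ : ∀ σ ∈ Δ, ∀ τ ⊆ σ, τ ∈ Δ)
    (hcone : ∃ v : Fin n, ∀ σ : Finset (Fin n), IsFacet Δ σ → v ∈ σ)
    (hfac : {σ : Finset (Fin n) | IsFacet Δ σ}.ncard = m) :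
    IsTverberg (m + 1) Δ := by
  classical
  obtain ⟨v, hv⟩ := hcone
  obtain ⟨F, hF, hFs⟩ := ConeTverberg.exists_facet_cover hm Δ hfac
  obtain ⟨R, hR⟩ := ConeTverberg.tverberg_pow (d := m + 1) n
  obtain ⟨N, hN⟩ := ConeTverberg.exists_clusters (m + 1 + 1) R
  refine ⟨N, fun P hP hcard => ?_⟩
  obtain ⟨pts, hptsP, hptsinj⟩ := ConeTverberg.exists_enum P
  obtain ⟨K, G, hKN, hKinj, hG0, hG⟩ := hN (fun t => ConeTverberg.lift (pts t)) (by
    intro t ht htN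
    refine ConeTverberg.vol_lift_ne_zero hP (fun i => pts (t i)) ?_
      fun i => hptsP _ ((htN i i.2).trans_le hcard)
    intro i j hij
    have h := hptsinj _ ((htN i i.2).trans_le hcard) _ ((htN j j.2).trans_le hcard) hij
    rcases lt_trichotomy i j with h1 | h1 | h1
    · exact absurd h (ht _ _ h1 j.2).ne
    · exact h1
    · exact absurd h (ht _ _ h1 i.2).ne')
  choose c q hq using fun j => hR (fun r => pts (K j r))
  have hKP : ∀ j r, pts (K j r) ∈ P := fun j r => hptsP _ ((hKN j r).trans_le hcard)
  have hKpts : ∀ j r j' r', pts (K j r) = pts (K j' r') → j = j' ∧ r = r' := fun j r j' r' h =>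
    hKinj _ _ _ _ (hptsinj _ ((hKN j r).trans_le hcard) _ ((hKN j' r').trans_le hcard) h)
  -- vertex `i` receives the `i`-th Tverberg part of every cluster whose facet contains `i`
  let Q₀ : Fin n → Finset (Pt (m + 1)) := fun i =>
    P.filter fun x => ∃ j r, i ∈ F j ∧ c j r = i ∧ x = pts (K j r)
  have hQ₀disj : ∀ i i', ∀ x, x ∈ Q₀ i → x ∈ Q₀ i' → i = i' := by
    intro i i' x hx hx'
    obtain ⟨j, r, -, hc, hx⟩ := (mem_filter.mp hx).2
    obtain ⟨j', r', -, hd, hx'⟩ := (mem_filter.mp hx').2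
    obtain ⟨rfl, rfl⟩ := hKpts _ _ _ _ (hx.symm.trans hx')
    exact Fin.ext (hc.symm.trans hd)
  -- the apex also takes every point not used by another vertex
  let Q : Fin n → Finset (Pt (m + 1)) := fun i =>
    P.filter fun x => if i = v then ∀ i', i' ≠ v → x ∉ Q₀ i' else x ∈ Q₀ i
  have hQne : ∀ i x, i ≠ v → (x ∈ Q i ↔ x ∈ Q₀ i) := by
    intro i x hi
    simp only [Q, mem_filter, if_neg hi, and_iff_right_iff_imp]
    exact fun h => (mem_filter.mp h).1
  have hQv : ∀ x, x ∈ Q v ↔ x ∈ P ∧ ∀ i', i' ≠ v → x ∉ Q₀ i' := by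
    intro x
    simp only [Q, mem_filter, if_true]
  have hQ₀Q : ∀ i, Q₀ i ⊆ Q i := by
    intro i x hx
    by_cases hi : i = v
    · subst hi
      exact (hQv x).mpr ⟨(mem_filter.mp hx).1, fun i' hi' hx' => hi' (hQ₀disj _ _ _ hx' hx)⟩
    · exact (hQne i x hi).mpr hx
  have hpart : ∀ i j, i ∈ F j → q j ∈ convexHull ℝ (Q i : Set (Pt (m + 1))) := by
    intro i j hij
    refine convexHull_mono ?_ (hq j i (i.2.trans Nat.lt_two_pow_self))
    rintro _ ⟨r, hr, rfl⟩
    exact hQ₀Q i (mem_filter.mpr ⟨hKP j r, j, r, hij, hr, rfl⟩)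
  refine ⟨Q, fun i => filter_subset _ _, fun x hx => ?_, fun i i' hii' => ?_, fun σ => ⟨?_, ?_⟩⟩
  · by_cases h : ∃ i, i ≠ v ∧ x ∈ Q₀ i
    · obtain ⟨i, -, hi⟩ := h
      exact ⟨i, hQ₀Q i hi⟩
    · push Not at h
      exact ⟨v, (hQv x).mpr ⟨hx, h⟩⟩
  · refine Finset.disjoint_left.mpr fun x hx hx' => ?_
    by_cases hi : i = v
    · subst hi
      exact ((hQv x).mp hx).2 i' hii'.symm ((hQne i' x hii'.symm).mp hx')
    · by_cases hi' : i' = v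
      · subst hi'
        exact ((hQv x).mp hx').2 i hi ((hQne i x hi).mp hx)
      · exact hii' (hQ₀disj _ _ _ ((hQne i x hi).mp hx) ((hQne i' x hi').mp hx'))
  · rintro ⟨p, hp⟩
    by_contra hσ
    have hσF : ∀ j, ∃ i ∈ σ, i ∉ F j := fun j => by
      by_contra! h
      exact hσ (hΔ _ (hF j).1 _ h)
    have hpos : ∀ j, 0 < G j (ConeTverberg.lift p) := by
      intro j
      obtain ⟨i, hiσ, hij⟩ := hσF j
      have hiv : i ≠ v := fun h => hij (h ▸ hv _ (hF j))
      have hpi := Set.mem_iInter₂.mp hp i hiσ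
      -- `Q i` avoids the `j`-th cluster, so `G j` is positive on all of it
      refine convexHull_min ?_ (ConeTverberg.convex_pos_lift (G j)) hpi
      intro x hx
      obtain ⟨l, r, hil, -, rfl⟩ := (mem_filter.mp ((hQne i x hiv).mp hx)).2
      exact hG j l r fun h => hij (h ▸ hil)
    have := Finset.sum_pos (fun j (_ : j ∈ univ) => hpos j) univ_nonempty
    exact this.ne' (hG0 _)
  · intro hσ
    obtain ⟨τ, hτ, hστ⟩ := ConeTverberg.exists_facet_superset Δ hσ
    obtain ⟨j, rfl⟩ := hFs τ hτ
    exact ⟨q j, Set.mem_iInter₂.mpr fun i hi => hpart i j (hστ hi)⟩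
end

section
/- If a simplicial complex Δ on vertex set [n] is weakly d-Tverberg for some integer d ≥ 1, then Δ is weakly (d+1)-Tverberg. -/
/-!
The proof reduces the intersection pattern of convex hulls to the combinatorics of sequences.

Call a sequence of points `K`-stretched if, in suitable homogeneous coordinates `x k i` with
`0 ≤ i ≤ d`, all entries are positive and each quotient `x k (i + 1) / x k i` grows at least by the
factor `K` from one point to the next. For `K` large compared with the number of classes and `d`,
whether the convex hulls of disjoint classes of such points have a common point depends only on the
order in which the classes occur (`hulls_meet_iff`): it happens if and only if the coloured sequence
contains a chain of `d + 1` blocks, each containing every colour, consecutive blocks sharing one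
point (`ColorChain`). By linear duality (`exists_sep`), the hulls have no common point if and only
if there are affine functionals with sum zero, each positive on its class. When no chain exists, a greedy
subdivision of the sequence into blocks produces such functionals, one coordinate being used per
block (`sep_of_not_ch`); when a chain exists, domination of single coordinates at the points of the
chain rules them out (`no_sep_of_ch`).

Stretched sequences are available in two ways. The points of the moment curve with parameters
`K ^ k` are stretched and in general position (`exists_moment`). Moreover every large set in general
position contains a long stretched sequence (`exists_stretched`): by the Ramsey theorem one passes
to a sequence on which all determinants have the same sign and certain cross-ratios of determinants
are either all at least `2` or all smaller than `2`; the latter contradicts the Grassmann–Plücker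
relations (`exists_good`). Skipping points then turns growth by `2` into growth by `K`.

Now let `Δ` be weakly `d`-Tverberg. Applied to moment curve points, the hypothesis gives a coloured
sequence whose chains of length `d + 1` describe `Δ`. Put one new point of each nonempty colour in
front of the sequence, in the order opposite to that of the first occurrences. This lengthens the
chains by exactly one block (`ch_prepend`), so the chains of length `d + 2` of the new sequence
describe `Δ` as well. Colouring accordingly a stretched sequence in an arbitrary large set in
general position in `ℝ^(d+1)` induces `Δ` (`transfer`).
-/

open Finset

/-! ### Ramsey theorem -/

/-- Finite Ramsey theorem for `r`-element subsets: if `S` is large enough, every colouring of its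
finite subsets has a colour `i` and a subset `T` of `S` with `g i` elements, all of whose
`r`-element subsets have colour `i`. -/
theorem ramsey_finset {α col : Type*} [DecidableEq α] [Fintype col] [DecidableEq col] (r : ℕ) :
    ∀ g : col → ℕ, ∃ L : ℕ, ∀ S : Finset α, L ≤ S.card → ∀ c : Finset α → col,
      ∃ i, ∃ T ⊆ S, T.card = g i ∧ ∀ U ⊆ T, U.card = r → c U = i := by
  induction r with
  | zero =>
    intro g
    refine ⟨∑ i, g i, fun S hS c => ⟨c ∅, ?_⟩⟩
    have h1 : g (c ∅) ≤ S.card :=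
      (Finset.single_le_sum (f := g) (fun _ _ => Nat.zero_le _) (Finset.mem_univ _)).trans hS
    obtain ⟨T, hT, hc⟩ := Finset.exists_subset_card_eq h1
    refine ⟨T, hT, hc, fun U _ hU => ?_⟩
    rw [Finset.card_eq_zero.mp hU]
  | succ r ih =>
    intro g
    induction hs : ∑ i, g i using Nat.strong_induction_on generalizing g with
    | _ t iht =>
    by_cases h0 : ∃ i, g i = 0
    · obtain ⟨i, hi⟩ := h0
      refine ⟨0, fun S _ c => ⟨i, ∅, by simp, by simp [hi], fun U hU hc => ?_⟩⟩
      rw [Finset.subset_empty.mp hU] at hc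
      simp at hc
    · -- lowering one target `g i` gives bounds `L i`; inside a set on which `U ↦ c (insert x U)` is
      -- constantly `i`, the bound `L i` yields the desired set, possibly after adding `x`
      push Not at h0
      have h1 : ∀ i, ∃ L : ℕ, ∀ S : Finset α, L ≤ S.card → ∀ c : Finset α → col,
          ∃ j, ∃ T ⊆ S, T.card = Function.update g i (g i - 1) j ∧
            ∀ U ⊆ T, U.card = r + 1 → c U = j := by
        intro i
        refine iht _ ?_ (Function.update g i (g i - 1)) rfl
        rw [← hs]
        refine Finset.sum_lt_sum (fun j _ => ?_) ⟨i, Finset.mem_univ _, ?_⟩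
        · by_cases hj : j = i
          · subst hj; simp
          · simp [hj]
        · have := h0 i
          simp only [Function.update_self]; omega
      choose L hL using h1
      obtain ⟨L0, hL0⟩ := ih (fun _ => ∑ i, L i)
      refine ⟨L0 + 1, fun S hS c => ?_⟩
      obtain ⟨x, hx⟩ : S.Nonempty := Finset.card_pos.mp (by omega)
      obtain ⟨i, T, hTS, hTc, hT⟩ := hL0 (S.erase x)
        (by rw [Finset.card_erase_of_mem hx]; omega) (fun U => c (insert x U))
      have hLi : L i ≤ T.card := by
        rw [hTc]
        exact Finset.single_le_sum (f := L) (fun _ _ => Nat.zero_le _) (Finset.mem_univ i)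
      obtain ⟨j, T', hT'T, hT'c, hTU⟩ := hL i T hLi c
      have hxT : x ∉ T' := fun h => by
        have := hTS (hT'T h)
        simp at this
      by_cases hj : j = i
      · subst hj
        refine ⟨j, insert x T', ?_, ?_, ?_⟩
        · intro y hy
          rcases Finset.mem_insert.mp hy with rfl | hy
          · exact hx
          · exact Finset.mem_of_mem_erase (hTS (hT'T hy))
        · rw [Finset.card_insert_of_notMem hxT, hT'c]
          have := h0 j
          simp only [Function.update_self]; omega
        · intro U hU hUc
          by_cases hxU : x ∈ U
          · rw [← Finset.insert_erase hxU]
            refine hT _ ?_ ?_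
            · intro y hy
              rcases Finset.mem_insert.mp (hU (Finset.mem_of_mem_erase hy)) with rfl | h
              · simp at hy
              · exact hT'T h
            · rw [Finset.card_erase_of_mem hxU]; omega
          · refine hTU _ ?_ hUc
            intro y hy
            rcases Finset.mem_insert.mp (hU hy) with rfl | h
            · exact absurd hy hxU
            · exact h
      · exact ⟨j, T', hT'T.trans (hTS.trans (Finset.erase_subset _ _)),
          by rw [hT'c]; simp [hj], hTU⟩

/-- Ramsey theorem for increasing `r`-tuples: every colouring of tuples of natural numbers is
constant on the increasing `r`-tuples drawn from some `N`-element subset of `{0, …, L - 1}`, listed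
increasingly as `f 0 < ⋯ < f (N - 1)`. -/
theorem ramsey_seq (col : Type*) [Fintype col] (r N : ℕ) :
    ∃ L : ℕ, ∀ c : (Fin r → ℕ) → col, ∃ f : ℕ → ℕ,
      (∀ i j, i < j → j < N → f i < f j) ∧ (∀ i < N, f i < L) ∧
      ∃ a, ∀ h : Fin r → ℕ, StrictMono h → (∀ t, h t < N) → c (f ∘ h) = a := by
  classical
  obtain ⟨L, hL⟩ := ramsey_finset (α := ℕ) (col := col) r (fun _ => N)
  refine ⟨L, fun c => ?_⟩
  obtain ⟨a, T, hTS, hTc, hT⟩ := hL (Finset.range L) (by simp)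
    (fun U => if h : U.card = r then c (U.orderEmbOfFin h) else c (fun _ => 0))
  refine ⟨fun i => if h : i < N then T.orderEmbOfFin hTc ⟨i, h⟩ else 0, ?_, ?_, a, ?_⟩
  · intro i j hij hj
    simp [hj, hij.trans hj, hij]
  · intro i hi
    have := hTS (T.orderEmbOfFin_mem hTc ⟨i, hi⟩)
    simpa [hi] using this
  · intro h hh hb
    set g : Fin r → ℕ := fun t => T.orderEmbOfFin hTc ⟨h t, hb t⟩ with hg
    have hgm : StrictMono g := fun s t hst => by
      simp only [hg]
      exact (T.orderEmbOfFin hTc).strictMono (hh hst)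
    have hU : (Finset.univ.image g).card = r := by
      rw [Finset.card_image_of_injective _ hgm.injective]; simp
    have h1 := hT (Finset.univ.image g) (by
      intro y hy
      obtain ⟨t, -, rfl⟩ := Finset.mem_image.mp hy
      exact T.orderEmbOfFin_mem hTc _) hU
    simp only [hU, dif_pos] at h1
    rw [← Finset.orderEmbOfFin_unique hU (f := g) (fun t => by simp) hgm] at h1
    rw [← h1]
    congr 1
    funext t
    simp [hg, hb t]

/-! ### Colourful chains -/

/-- Colourful chains. The colour class of `c` is the set of positions `Q c`. Starting strictly
after the position `p`, and with the colour `j` regarded as already seen (no colour if `j = none`),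
read until every colour of `σ` has been seen: this happens at a position `k`, of colour `b`, while
all other colours have been seen in between. A chain of length `m` consists of `m` such consecutive
blocks, each block after the first sharing its initial position with the end of the previous one.
Choosing `k` larger than the first possible position is allowed, since this does not affect which
lengths occur. -/
def ColorChain {ι κ : Type*} [LinearOrder κ] (Q : ι → Finset κ) (σ : Finset ι) :
    ℕ → Option ι → WithBot κ → Prop
  | 0, _, _ => True
  | m + 1, j, p => ∃ b ∈ σ, some b ≠ j ∧ ∃ k ∈ Q b, p < (k : WithBot κ) ∧
      (∀ c ∈ σ, some c ≠ j → c ≠ b → ∃ l ∈ Q c, p < (l : WithBot κ) ∧ l < k) ∧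
      ColorChain Q σ m (some b) k

theorem ColorChain.mono {ι κ : Type*} [LinearOrder κ] {Q Q' : ι → Finset κ} {σ : Finset ι}
    (hQ : ∀ c ∈ σ, Q c ⊆ Q' c) (m : ℕ) : ∀ j p, ColorChain Q σ m j p → ColorChain Q' σ m j p := by
  induction m with
  | zero => intro j p _; trivial
  | succ m ih =>
    rintro j p ⟨b, hb, hbj, k, hk, hpk, hc, hCh⟩
    refine ⟨b, hb, hbj, k, hQ b hb hk, hpk, fun c hcσ h1 h2 => ?_, ih _ _ hCh⟩
    obtain ⟨l, hl, h3⟩ := hc c hcσ h1 h2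
    exact ⟨l, hQ c hcσ hl, h3⟩

/-- Inserting into the colour classes points that are smaller than the starting position creates
no new chain. -/
theorem ColorChain.of_insert {ι κ : Type*} [LinearOrder κ] {Q Q' : ι → Finset κ} {σ : Finset ι}
    {v : ι → κ} (hQ : ∀ c ∈ σ, Q' c = insert (v c) (Q c)) (m : ℕ) :
    ∀ j (p : κ), (∀ c ∈ σ, v c < p) → ColorChain Q' σ m j p → ColorChain Q σ m j p := by
  induction m with
  | zero => intro j p _ _; trivial
  | succ m ih =>
    rintro j p hp ⟨b, hb, hbj, k, hk, hpk, hc, hCh⟩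
    have key : ∀ c ∈ σ, ∀ l ∈ Q' c, (p : WithBot κ) < l → l ∈ Q c := by
      intro c hcσ l hl hpl
      rw [hQ c hcσ] at hl
      rcases Finset.mem_insert.mp hl with rfl | h
      · exact absurd (WithBot.coe_lt_coe.mp hpl) (hp c hcσ).not_gt
      · exact h
    refine ⟨b, hb, hbj, k, key b hb k hk hpk, hpk, fun c hcσ h1 h2 => ?_, ?_⟩
    · obtain ⟨l, hl, h3, h4⟩ := hc c hcσ h1 h2
      exact ⟨l, key c hcσ l hl h3, h3, h4⟩
    · exact ih _ _ (fun c hcσ => (hp c hcσ).trans (WithBot.coe_lt_coe.mp hpk)) hCh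

/-- Prepending one point `v c` to every colour class, in the order opposite to that of the first
points `w c` of the classes, increases the maximal length of a chain by exactly one. The
prepended points exhibit every colour, so a first block can be completed by the smallest `w c` with
`c ≠ b`, where `b` is the colour ending the first block of a given chain; that block then still ends
at its old position when read from `w c`. -/
theorem ch_prepend {ι κ : Type*} [DecidableEq ι] [LinearOrder κ] {Q Q' : ι → Finset κ}
    {σ : Finset ι}
    (hσ : 2 ≤ σ.card) {v w : ι → κ}
    (hdisj : ∀ a b, a ≠ b → Disjoint (Q a) (Q b))
    (hwQ : ∀ a ∈ σ, w a ∈ Q a) (hwle : ∀ a ∈ σ, ∀ l ∈ Q a, w a ≤ l)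
    (hQ : ∀ c ∈ σ, Q' c = insert (v c) (Q c))
    (hv : ∀ a ∈ σ, ∀ b ∈ σ, ∀ l ∈ Q b, v a < l)
    (hvw : ∀ a ∈ σ, ∀ b ∈ σ, v b < v a → w a < w b) (m : ℕ) :
    ColorChain Q' σ (m + 2) none ⊥ ↔ ColorChain Q σ (m + 1) none ⊥ := by
  have hsub : ∀ c ∈ σ, Q c ⊆ Q' c := fun c hc => by
    rw [hQ c hc]; exact Finset.subset_insert _ _
  have hvle : ∀ c ∈ σ, ∀ l ∈ Q' c, v c ≤ l := by
    intro c hc l hl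
    rw [hQ c hc] at hl
    rcases Finset.mem_insert.mp hl with rfl | h
    · exact le_rfl
    · exact (hv c hc c hc l h).le
  constructor
  · -- the first block of the long chain is dropped; its second block already lies among the old
    -- points, except for the colour `b₁`, which is replaced by an old point of that colour
    rintro ⟨b₁, hb₁, -, k₁, hk₁, -, h₁, b₂, hb₂, hb₂₁, k₂, hk₂, hk₁₂, h₂, hCh⟩
    have hb21 : b₂ ≠ b₁ := fun h => hb₂₁ (by rw [h])
    have hk12 : k₁ < k₂ := WithBot.coe_lt_coe.mp hk₁₂
    have hvk : ∀ c ∈ σ, c ≠ b₁ → v c < k₁ := by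
      intro c hc hcb
      obtain ⟨l, hl, -, hlt⟩ := h₁ c hc (by simp) hcb
      exact (hvle c hc l hl).trans_lt hlt
    have hk2 : k₂ ∈ Q b₂ := by
      rw [hQ b₂ hb₂] at hk₂
      rcases Finset.mem_insert.mp hk₂ with h | h
      · exact absurd (hvk b₂ hb₂ hb21) (by rw [← h]; exact hk12.not_gt)
      · exact h
    refine ⟨b₂, hb₂, by simp, k₂, hk2, WithBot.bot_lt_coe _, ?_, ?_⟩
    · intro c hc _ hcb2
      by_cases hcb1 : c = b₁
      · subst hcb1
        rw [hQ c hc] at hk₁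
        rcases Finset.mem_insert.mp hk₁ with h | h
        · refine ⟨w c, hwQ c hc, WithBot.bot_lt_coe _, ?_⟩
          exact (hvw c hc b₂ hb₂ (by rw [← h]; exact hvk b₂ hb₂ hb21)).trans_le
            (hwle b₂ hb₂ k₂ hk2)
        · exact ⟨k₁, h, WithBot.bot_lt_coe _, hk12⟩
      · obtain ⟨l, hl, hkl, hlk⟩ := h₂ c hc (by simpa using hcb1) hcb2
        rw [hQ c hc] at hl
        rcases Finset.mem_insert.mp hl with h | h
        · exact absurd (hvk c hc hcb1) (by rw [← h]; exact (WithBot.coe_lt_coe.mp hkl).not_gt)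
        · exact ⟨l, h, WithBot.bot_lt_coe _, hlk⟩
    · exact ColorChain.of_insert hQ m _ _ (fun c hc => hv c hc b₂ hb₂ k₂ hk2) hCh
  · -- the new first block ends at the first point of `c₀`, the earliest colour other than the colour
    -- `b` that ends the given first block
    rintro ⟨b, hb, -, k, hk, -, h, hCh⟩
    have hne : (σ.erase b).Nonempty := by
      rw [← Finset.card_pos, Finset.card_erase_of_mem hb]; omega
    obtain ⟨c₀, hc₀, hmin⟩ := Finset.exists_min_image (σ.erase b) w hne
    have hc₀σ := Finset.mem_of_mem_erase hc₀
    have hc₀b := Finset.ne_of_mem_erase hc₀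
    have hlt : ∀ c ∈ σ, c ≠ b → w c < k := by
      intro c hc hcb
      obtain ⟨l, hl, -, hlk⟩ := h c hc (by simp) hcb
      exact (hwle c hc l hl).trans_lt hlk
    refine ⟨c₀, hc₀σ, by simp, w c₀, hsub _ hc₀σ (hwQ _ hc₀σ), WithBot.bot_lt_coe _, ?_,
      b, hb, by simpa using hc₀b.symm, k, hsub _ hb hk, ?_, ?_, ColorChain.mono hsub m _ _ hCh⟩
    · intro c hc _ _
      refine ⟨v c, ?_, WithBot.bot_lt_coe _, hv c hc c₀ hc₀σ _ (hwQ _ hc₀σ)⟩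
      rw [hQ c hc]; exact Finset.mem_insert_self _ _
    · exact WithBot.coe_lt_coe.mpr (hlt c₀ hc₀σ hc₀b)
    · intro c hc hcc hcb
      have hcc' : c ≠ c₀ := by simpa using hcc
      refine ⟨w c, hsub c hc (hwQ c hc), WithBot.coe_lt_coe.mpr ?_, hlt c hc hcb⟩
      refine lt_of_le_of_ne (hmin c (Finset.mem_erase.mpr ⟨hcb, hc⟩)) fun heq => ?_
      exact Finset.disjoint_left.mp (hdisj c c₀ hcc') (hwQ c hc) (heq ▸ hwQ c₀ hc₀σ)

/-! ### Separation in the absence of a chain -/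

/-- A positive array with `m` columns, whose rows `x k` are indexed by a linear order, is
`K`-stretched if the quotients `x k (i + 1) / x k i` grow at least by the factor `K` from each row
to any later one. The condition is written without division. -/
structure StretchedArray {κ : Type*} [LinearOrder κ] (K : ℝ) (m : ℕ) (x : κ → ℕ → ℝ) : Prop where
  pos : ∀ k, ∀ i < m, 0 < x k i
  grow : ∀ i, i + 1 < m → ∀ l l', l < l' → K * (x l (i + 1) * x l' i) ≤ x l' (i + 1) * x l i

/-- In a stretched array, quotients of non-adjacent columns grow by the factor `K` as well. -/
theorem StretchedArray.ratio {κ : Type*} [LinearOrder κ] {K : ℝ} {m : ℕ} {x : κ → ℕ → ℝ}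
    (hx : StretchedArray K m x) (hK : 1 ≤ K) {i j : ℕ} (hij : i < j) (hj : j < m) {l l' : κ} (hl : l < l') :
    K * (x l j * x l' i) ≤ x l' j * x l i := by
  induction j, hij using Nat.le_induction with
  | base => exact hx.grow i hj l l' hl
  | succ j hij ih =>
    have h1 := ih (by omega)
    have h2 := hx.grow j hj l l' hl
    have p1 := hx.pos l j (by omega)
    have p2 := hx.pos l' j (by omega)
    have p3 := hx.pos l i (by omega)
    have p4 := hx.pos l' i (by omega)
    have p5 := hx.pos l (j + 1) hj
    have p6 := hx.pos l' (j + 1) hj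
    have h3 : (K * (x l (j + 1) * x l' j)) * (x l j * x l' i) ≤
        (x l' (j + 1) * x l j) * (x l' j * x l i) := by
      refine mul_le_mul h2 ?_ (by positivity) (by positivity)
      refine le_trans ?_ h1
      exact le_mul_of_one_le_left (by positivity) hK
    refine le_of_mul_le_mul_right ?_ (mul_pos p1 p2)
    linarith

theorem StretchedArray.tail {κ : Type*} [LinearOrder κ] {K : ℝ} {m : ℕ} {x : κ → ℕ → ℝ}
    (hx : StretchedArray K (m + 1) x) : StretchedArray K m (fun l i => x l (i + 1)) :=
  ⟨fun k i hi => hx.pos k (i + 1) (by omega), fun i hi l₁ l₂ h => hx.grow (i + 1) (by omega) l₁ l₂ h⟩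

/-- The sequence `a, f 0, f 1, …`. -/
def scons {α : Type*} (a : α) (f : ℕ → α) : ℕ → α
  | 0 => a
  | i + 1 => f i

theorem scons_zero {α : Type*} (a : α) (f : ℕ → α) : scons a f 0 = a := rfl

theorem scons_succ {α : Type*} (a : α) (f : ℕ → α) (i : ℕ) : scons a f (i + 1) = f i := rfl

theorem sum_one_neg {ι : Type*} [DecidableEq ι] (σ : Finset ι) {a : ι} (ha : a ∈ σ) :
    ∑ c ∈ σ, (if c = a then -((σ.card : ℝ) - 1) else 1) = 0 := by
  rw [← Finset.add_sum_erase σ _ ha, if_pos rfl,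
    Finset.sum_congr rfl (g := fun _ => (1 : ℝ)) (fun c hc => by
      rw [if_neg (Finset.ne_of_mem_erase hc)])]
  rw [Finset.sum_const, Finset.card_erase_of_mem ha]
  have : 1 ≤ σ.card := Finset.card_pos.mpr ⟨a, ha⟩
  simp [Nat.cast_sub this]

/-- If there is no chain of length `m`, the colour classes can be separated: there are linear
functionals `f c`, summing to zero over `c ∈ σ`, each positive on the rows of its class. The
statement is quantitative, with a common majorant `θ`, for the sake of the induction on `m`, and
only the rows after `p`, together with the row `p` for the colour `j`, are taken into account. -/
theorem sep_of_not_ch {ι κ : Type*} [DecidableEq ι] [LinearOrder κ] {Q : ι → Finset κ}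
    {σ : Finset ι} (hσ : 2 ≤ σ.card)
    (hdisj : ∀ a b, a ≠ b → Disjoint (Q a) (Q b)) {K L : ℝ} (m : ℕ) :
    4 * (σ.card + 1) * 2 ^ m ≤ L → L ^ 2 ≤ K →
    ∀ (x : κ → ℕ → ℝ), StretchedArray K m x →
    ∀ (j : Option ι) (p : WithBot κ), ¬ ColorChain Q σ m j p →
    ∃ (f : ι → ℕ → ℝ) (θ : ℕ → ℝ), (∀ i, 0 ≤ θ i) ∧
      (∀ c ∈ σ, ∀ i, |f c i| ≤ σ.card * θ i) ∧ (∀ i, ∑ c ∈ σ, f c i = 0) ∧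
      (∀ l, 0 < ∑ i ∈ Finset.range m, θ i * x l i) ∧
      ∀ c ∈ σ, ∀ l ∈ Q c, (p < (l : WithBot κ) ∨ ((l : WithBot κ) = p ∧ some c = j)) →
        (1 / 2 ^ m) * ∑ i ∈ Finset.range m, θ i * x l i ≤
          ∑ i ∈ Finset.range m, f c i * x l i := by
  have hs2 : (2 : ℝ) ≤ σ.card := by exact_mod_cast hσ
  induction m with
  | zero => intro _ _ x _ j p h; exact absurd trivial h
  | succ m ih =>
    intro hL hK x hx j p hCh
    have hpow : (1 : ℝ) ≤ 2 ^ m := one_le_pow₀ (by norm_num)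
    have hL1 : 4 * (σ.card + 1) * 2 ^ m ≤ L := by
      rw [pow_succ] at hL
      nlinarith
    have hL12 : 12 ≤ L := by nlinarith
    have hK1 : 1 ≤ K := by nlinarith
    by_cases hA : ∃ a ∈ σ, some a ≠ j ∧ ∀ l ∈ Q a, ¬ p < (l : WithBot κ)
    · -- some colour `a` does not occur after `p`, so the zeroth coordinate alone separates
      obtain ⟨a, ha, haj, hal⟩ := hA
      refine ⟨fun c i => if i = 0 then (if c = a then -((σ.card : ℝ) - 1) else 1) else 0,
        fun i => if i = 0 then 1 else 0, ?_, ?_, ?_, ?_, ?_⟩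
      · intro i; dsimp only; split_ifs <;> norm_num
      · intro c _ i
        dsimp only
        split_ifs
        · rw [abs_neg, abs_of_nonneg] <;> linarith
        · rw [abs_one]; linarith
        · simp
      · intro i
        by_cases hi : i = 0
        · simp only [hi, if_true]; exact sum_one_neg σ ha
        · simp [hi]
      · intro l
        simp only [ite_mul, one_mul, zero_mul, Finset.sum_ite_eq', Finset.mem_range]
        rw [if_pos (by omega)]
        exact hx.pos l 0 (by omega)
      · intro c hc l hl hpl
        have hca : c ≠ a := by
          rintro rfl
          rcases hpl with h | h
          · exact hal l hl h
          · exact haj h.2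
        simp only [ite_mul, one_mul, zero_mul, Finset.sum_ite_eq', Finset.mem_range, if_neg hca]
        rw [if_pos (by omega)]
        have := hx.pos l 0 (by omega)
        have h1 : (1 : ℝ) / 2 ^ (m + 1) ≤ 1 := by
          rw [div_le_one (by positivity)]; exact one_le_pow₀ (by norm_num)
        nlinarith
    · -- let `w a` be the first occurrence of `a` after `p`; the last of these is `k = w b`, where the
      -- first block ends, and from `k` on there is no chain of length `m`
      push Not at hA
      have hw : ∀ a, ∃ w, a ∈ σ → some a ≠ j → w ∈ Q a ∧ p < (w : WithBot κ) ∧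
          ∀ l ∈ Q a, p < (l : WithBot κ) → w ≤ l := by
        intro a
        by_cases ha : a ∈ σ ∧ some a ≠ j
        · obtain ⟨l, hl, hpl⟩ := hA a ha.1 ha.2
          obtain ⟨w, hw, hmin⟩ := Finset.exists_min_image
            ((Q a).filter (fun l : κ => p < (l : WithBot κ))) id
            ⟨l, Finset.mem_filter.mpr ⟨hl, hpl⟩⟩
          rw [Finset.mem_filter] at hw
          exact ⟨w, fun _ _ => ⟨hw.1, hw.2, fun l hl hpl =>
            hmin l (Finset.mem_filter.mpr ⟨hl, hpl⟩)⟩⟩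
        · have hne : Nonempty κ := by
            obtain ⟨a, ha, b, hb, hab⟩ := Finset.one_lt_card.mp hσ
            by_cases haj : some a = j
            · obtain ⟨l, _⟩ := hA b hb (fun h => hab (Option.some_injective _ (haj.trans h.symm)))
              exact ⟨l⟩
            · obtain ⟨l, _⟩ := hA a ha haj
              exact ⟨l⟩
          exact ⟨hne.some, fun h1 h2 => absurd ⟨h1, h2⟩ ha⟩
      choose w hw using hw
      have hne : (σ.filter (fun a => some a ≠ j)).Nonempty := by
        obtain ⟨a, ha, b, hb, hab⟩ := Finset.one_lt_card.mp hσ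
        by_cases haj : some a = j
        · exact ⟨b, Finset.mem_filter.mpr
            ⟨hb, fun h => hab (Option.some_injective _ (haj.trans h.symm))⟩⟩
        · exact ⟨a, Finset.mem_filter.mpr ⟨ha, haj⟩⟩
      obtain ⟨b, hb, hmax⟩ := Finset.exists_max_image _ w hne
      rw [Finset.mem_filter] at hb
      obtain ⟨hbσ, hbj⟩ := hb
      obtain ⟨hkQ, hpk, hkmin⟩ := hw b hbσ hbj
      set k := w b with hk
      have hnot : ¬ ColorChain Q σ m (some b) (k : WithBot κ) := by
        intro h
        refine hCh ⟨b, hbσ, hbj, k, hkQ, hpk, fun c hc hcj hcb => ?_, h⟩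
        obtain ⟨h1, h2, h3⟩ := hw c hc hcj
        refine ⟨w c, h1, h2, lt_of_le_of_ne (hmax c (Finset.mem_filter.mpr ⟨hc, hcj⟩)) ?_⟩
        intro heq
        exact Finset.disjoint_left.mp (hdisj c b hcb) h1 (heq ▸ hkQ)
      obtain ⟨g, θ, hθ, hgθ, hg0, hT, hg⟩ := ih hL1 hK _ hx.tail (some b) k hnot
      set T : κ → ℝ := fun l => ∑ i ∈ Finset.range m, θ i * x l (i + 1) with hTdef
      have hTpos : ∀ l, 0 < T l := hT
      have hx0 : ∀ l, 0 < x l 0 := fun l => hx.pos l 0 (by omega)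
      have hTr : ∀ l l', l < l' → K * (T l * x l' 0) ≤ T l' * x l 0 := by
        intro l l' hl
        simp only [hTdef, Finset.sum_mul, Finset.mul_sum]
        refine Finset.sum_le_sum fun i hi => ?_
        have := hx.ratio hK1 (Nat.succ_pos i) (by have := Finset.mem_range.mp hi; omega) hl
        have := mul_le_mul_of_nonneg_left this (hθ i)
        simp only [Nat.succ_eq_add_one] at this
        linarith
      -- the zeroth coordinate decides before `k`, where colour `b` is absent; the functionals
      -- of the induction hypothesis, scaled by `t`, decide from `k` on
      set t : ℝ := L * x k 0 / T k with ht
      have htpos : 0 < t := by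
        have := hx0 k; have := hTpos k; positivity
      have htk : t * T k = L * x k 0 := by
        rw [ht]; field_simp [(hTpos k).ne']
      -- comparison of the zeroth coordinate with the rest, on both sides of `k`
      have hlow : ∀ l, l < k → L * (t * T l) ≤ x l 0 := by
        intro l hl
        have h1 := hTr l k hl
        have h2 : L * (t * T l) * T k = L ^ 2 * (T l * x k 0) := by
          rw [show L * (t * T l) * T k = L * T l * (t * T k) by ring, htk]; ring
        refine le_of_mul_le_mul_right ?_ (hTpos k)
        rw [h2]
        have := mul_le_mul_of_nonneg_right hK (mul_pos (hTpos l) (hx0 k)).le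
        linarith
      have hhigh : ∀ l, k ≤ l → L * x l 0 ≤ t * T l := by
        intro l hl
        have h1 : T k * x l 0 ≤ T l * x k 0 := by
          rcases hl.eq_or_lt with rfl | hl
          · exact le_rfl
          · refine le_trans ?_ (hTr k l hl)
            exact le_mul_of_one_le_left (mul_pos (hTpos k) (hx0 l)).le hK1
        refine le_of_mul_le_mul_right ?_ (hTpos k)
        rw [show t * T l * T k = T l * (t * T k) by ring, htk]
        have := mul_le_mul_of_nonneg_left h1 (by linarith : (0 : ℝ) ≤ L)
        linarith
      refine ⟨fun c => scons (if c = b then -((σ.card : ℝ) - 1) else 1)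
          (fun i => t * g c i), scons 1 (fun i => t * θ i), ?_, ?_, ?_, ?_, ?_⟩
      · intro i
        cases i with
        | zero => simp [scons_zero]
        | succ i => exact mul_nonneg htpos.le (hθ i)
      · intro c hc i
        cases i with
        | zero =>
          simp only [scons_zero]
          split_ifs
          · rw [abs_neg, abs_of_nonneg] <;> linarith
          · rw [abs_one]; linarith
        | succ i =>
          simp only [scons_succ]
          rw [abs_mul, abs_of_pos htpos]
          have := mul_le_mul_of_nonneg_left (hgθ c hc i) htpos.le
          linarith
      · intro i
        cases i with
        | zero => exact sum_one_neg σ hbσ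
        | succ i => simp only [scons_succ]; rw [← Finset.mul_sum, hg0, mul_zero]
      · intro l
        rw [Finset.sum_range_succ']
        simp only [scons_zero, scons_succ, mul_assoc]
        rw [← Finset.mul_sum]
        have h1 := mul_pos htpos (hTpos l)
        have h2 := hx0 l
        have e1 : ∑ i ∈ Finset.range m, θ i * x l (i + 1) = T l := rfl
        rw [e1]
        linarith
      · intro c hc l hl hpl
        rw [Finset.sum_range_succ', Finset.sum_range_succ']
        simp only [scons_zero, scons_succ, mul_assoc]
        rw [← Finset.mul_sum, ← Finset.mul_sum, one_mul]
        have e1 : ∑ i ∈ Finset.range m, θ i * x l (i + 1) = T l := rfl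
        rw [e1]
        set G := ∑ i ∈ Finset.range m, g c i * x l (i + 1) with hG
        have hη : (1 : ℝ) / 2 ^ (m + 1) = (1 / 2 ^ m) / 2 := by rw [pow_succ]; field_simp
        rw [hη]
        set η : ℝ := 1 / 2 ^ m with hηdef
        have hη0 : 0 < η := by positivity
        have hη1 : η ≤ 1 := by rw [hηdef, div_le_one (by positivity)]; exact hpow
        have hLη : 4 * (σ.card + 1) ≤ L * η := by
          rw [hηdef, mul_one_div, le_div_iff₀ (by positivity)]; exact hL1
        have hX := hx0 l
        have hTl := mul_pos htpos (hTpos l)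
        rcases lt_or_ge l k with hlk | hlk
        · have hcb : c ≠ b := by
            rintro rfl
            rcases hpl with h | h
            · exact absurd (hkmin l hl h) hlk.not_ge
            · exact hbj h.2
          rw [if_neg hcb]
          have hGT : -(σ.card * T l) ≤ G := by
            have : |G| ≤ σ.card * T l := by
              refine (Finset.abs_sum_le_sum_abs _ _).trans ?_
              rw [hTdef]
              simp only
              rw [Finset.mul_sum]
              refine Finset.sum_le_sum fun i hi => ?_
              have hp := hx.pos l (i + 1) (by have := Finset.mem_range.mp hi; omega)
              rw [abs_mul, abs_of_pos hp, ← mul_assoc]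
              exact mul_le_mul_of_nonneg_right (hgθ c hc i) hp.le
            exact (abs_le.mp this).1
          have h1 := hlow l hlk
          have h2 : -(σ.card * (t * T l)) ≤ t * G := by
            have := mul_le_mul_of_nonneg_left hGT htpos.le
            linarith
          have h3 : 4 * (σ.card + 1) * (t * T l) ≤ x l 0 := by
            refine le_trans (mul_le_mul_of_nonneg_right ?_ hTl.le) h1
            nlinarith
          nlinarith
        · have hlg : η * T l ≤ G := by
            refine hg c hc l hl ?_
            rcases hlk.eq_or_lt with h | h
            · right
              refine ⟨by rw [h], ?_⟩
              by_contra hcb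
              have hcb' : c ≠ b := fun e => hcb (by rw [e])
              exact Finset.disjoint_left.mp (hdisj c b hcb') hl (h ▸ hkQ)
            · left; exact WithBot.coe_lt_coe.mpr h
          have h1 := hhigh l hlk
          have h2 : η * (t * T l) ≤ t * G := by
            have := mul_le_mul_of_nonneg_left hlg htpos.le
            linarith
          have h3 : -(σ.card * x l 0) ≤ (if c = b then -((σ.card : ℝ) - 1) else 1) * x l 0 := by
            split_ifs <;> nlinarith
          have h4 : 4 * (σ.card + 1) * x l 0 ≤ η * (t * T l) := by
            have := mul_le_mul_of_nonneg_right hLη hX.le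
            have := mul_le_mul_of_nonneg_left h1 hη0.le
            linarith
          nlinarith

/-! ### Chains obstruct separation -/

/-- A chain of length `m + 1` in explicit form: `J i` is the colour ending the `i`-th block and
`E i c` the occurrence of `c` in that block; the last position `E i (J i)` of a block is the initial
position `E (i + 1) (J i)` of the next one. -/
theorem ColorChain.unroll {ι κ : Type*} [DecidableEq ι] [LinearOrder κ] {Q : ι → Finset κ}
    {σ : Finset ι} (m : ℕ) : ∀ (j : Option ι) (p : WithBot κ),
    (∀ c ∈ σ, some c = j → ∃ p' ∈ Q c, (p' : WithBot κ) = p) → ColorChain Q σ (m + 1) j p →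
    ∃ (J : ℕ → ι) (E : ℕ → ι → κ), (∀ i ≤ m, J i ∈ σ) ∧ (∀ i ≤ m, ∀ c ∈ σ, E i c ∈ Q c) ∧
      (∀ c ∈ σ, (some c ≠ j → p < (E 0 c : WithBot κ)) ∧
        (some c = j → (E 0 c : WithBot κ) = p)) ∧ some (J 0) ≠ j ∧
      (∀ i ≤ m, ∀ c ∈ σ, c ≠ J i → E i c < E i (J i)) ∧
      (∀ i < m, E (i + 1) (J i) = E i (J i) ∧ J (i + 1) ≠ J i ∧
        ∀ c ∈ σ, c ≠ J i → E i (J i) < E (i + 1) c) := by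
  have first : ∀ (j : Option ι) (p : WithBot κ),
      (∀ c ∈ σ, some c = j → ∃ p' ∈ Q c, (p' : WithBot κ) = p) →
      ∀ b ∈ σ, some b ≠ j → ∀ k ∈ Q b, p < (k : WithBot κ) →
      (∀ c ∈ σ, some c ≠ j → c ≠ b → ∃ l ∈ Q c, p < (l : WithBot κ) ∧ l < k) →
      ∃ e : ι → κ, e b = k ∧ (∀ c ∈ σ, e c ∈ Q c) ∧ (∀ c ∈ σ, (some c ≠ j → p < (e c : WithBot κ)) ∧
        (some c = j → (e c : WithBot κ) = p)) ∧ ∀ c ∈ σ, c ≠ b → e c < k := by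
    intro j p hj b hb hbj k hk hpk hc
    have : ∀ c, ∃ e, (c = b → e = k) ∧ (c ∈ σ → e ∈ Q c ∧ ((some c ≠ j → p < (e : WithBot κ)) ∧
        (some c = j → (e : WithBot κ) = p)) ∧ (c ≠ b → e < k)) := by
      intro c
      by_cases hcb : c = b
      · subst hcb
        exact ⟨k, fun _ => rfl, fun _ => ⟨hk, ⟨fun _ => hpk, fun h => absurd h hbj⟩,
          fun h => absurd rfl h⟩⟩
      · by_cases hcσ : c ∈ σ
        · by_cases hcj : some c = j
          · obtain ⟨p', hp', rfl⟩ := hj c hcσ hcj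
            exact ⟨p', fun h => absurd h hcb, fun _ => ⟨hp', ⟨fun h => absurd hcj h, fun _ => rfl⟩,
              fun _ => WithBot.coe_lt_coe.mp hpk⟩⟩
          · obtain ⟨l, hl, hpl, hlk⟩ := hc c hcσ hcj hcb
            exact ⟨l, fun h => absurd h hcb, fun _ => ⟨hl, ⟨fun _ => hpl, fun h => absurd h hcj⟩,
              fun _ => hlk⟩⟩
        · exact ⟨k, fun h => absurd h hcb, fun h => absurd h hcσ⟩
    choose e he1 he2 using this
    exact ⟨e, he1 b rfl, fun c hc => (he2 c hc).1, fun c hc => (he2 c hc).2.1,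
      fun c hc => (he2 c hc).2.2⟩
  induction m with
  | zero =>
    rintro j p hj ⟨b, hb, hbj, k, hk, hpk, hc, -⟩
    obtain ⟨e, heb, he1, he2, he3⟩ := first j p hj b hb hbj k hk hpk hc
    refine ⟨fun _ => b, fun _ => e, fun _ _ => hb, fun _ _ => he1, he2, hbj, ?_, ?_⟩
    · intro _ _ c hc hcb
      show e c < e b
      rw [heb]; exact he3 c hc hcb
    · intro i hi; omega
  | succ m ih =>
    rintro j p hj ⟨b, hb, hbj, k, hk, hpk, hc, hCh⟩
    obtain ⟨e, heb, he1, he2, he3⟩ := first j p hj b hb hbj k hk hpk hc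
    obtain ⟨J, E, h1, h2, h3, h4, h5, h6⟩ := ih (some b) k
      (fun c _ h => ⟨k, by rw [Option.some_injective _ h]; exact hk, rfl⟩) hCh
    refine ⟨scons b J, scons e E, ?_, ?_, he2, hbj, ?_, ?_⟩
    · rintro (_ | i) hi
      · exact hb
      · exact h1 i (by omega)
    · rintro (_ | i) hi
      · exact he1
      · exact h2 i (by omega)
    · rintro (_ | i) hi
      · intro c hc hcb
        show e c < e b
        rw [heb]; exact he3 c hc hcb
      · exact h5 i (by omega)
    · rintro (_ | i) hi
      · refine ⟨?_, fun h => h4 (congrArg some h), fun c hc hcb => ?_⟩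
        · show E 0 b = e b
          rw [heb]; exact WithBot.coe_injective ((h3 b hb).2 rfl)
        · show e b < E 0 c
          rw [heb]
          exact WithBot.coe_lt_coe.mp ((h3 c hc).1 (fun h => hcb (Option.some_injective _ h)))
      · exact h6 i (by omega)

theorem le_of_sum_zero {ι : Type*} [DecidableEq ι] {σ : Finset ι} {a : ι → ℝ} {X : ℝ} (hX : 0 ≤ X)
    (h0 : ∑ c ∈ σ, a c = 0) {b : ι} (hb : b ∈ σ) (h : ∀ c ∈ σ, c ≠ b → -X ≤ a c) :
    a b ≤ σ.card * X := by
  rw [← Finset.add_sum_erase σ a hb] at h0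
  have h1 : ∑ c ∈ σ.erase b, (-X) ≤ ∑ c ∈ σ.erase b, a c :=
    Finset.sum_le_sum fun c hc => h c (Finset.mem_of_mem_erase hc) (Finset.ne_of_mem_erase hc)
  rw [Finset.sum_const, nsmul_eq_mul] at h1
  have h2 : ((σ.erase b).card : ℝ) ≤ σ.card := by exact_mod_cast Finset.card_erase_le
  nlinarith

/-- Consider real numbers `a i c` with zero sum over `c ∈ σ` for every block `i`. Approximate
nonnegativity at every occurrence (`hN`) and of the sum of the two coefficients at each junction
(`hjun`) forces all of them to be of the order of `ε`: lower bounds propagate forward along the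
blocks and then backward. -/
theorem chain_bound {ι : Type*} [DecidableEq ι] {σ : Finset ι} {a : ℕ → ι → ℝ} {J : ℕ → ι}
    {ε : ℝ} (hε : 0 ≤ ε) (m : ℕ) (hJ : ∀ i ≤ m, J i ∈ σ)
    (hS : ∀ i ≤ m, ∑ c ∈ σ, a i c = 0)
    (hjun : ∀ i < m, -ε ≤ a i (J i) + a (i + 1) (J i))
    (hN : ∀ i ≤ m, ∀ c ∈ σ, (c ≠ J i ∨ i = m) → (∀ i', i = i' + 1 → c ≠ J i') → -ε ≤ a i c) :
    ∀ i ≤ m, ∀ c ∈ σ, |a i c| ≤ ((σ.card : ℝ) + 2) ^ (2 * m + 1) * ε := by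
  set B : ℝ := (σ.card : ℝ) + 2 with hB
  have hs : (0 : ℝ) ≤ σ.card := Nat.cast_nonneg _
  have hB1 : 1 ≤ B := by linarith
  have hp : ∀ t, ε ≤ B ^ t * ε := fun t => le_mul_of_one_le_left hε (one_le_pow₀ hB1)
  have hpp : ∀ t, ε + σ.card * (B ^ t * ε) ≤ B ^ (t + 1) * ε := by
    intro t
    have := hp t
    rw [pow_succ]
    have e : B ^ t * B * ε = (σ.card : ℝ) * (B ^ t * ε) + 2 * (B ^ t * ε) := by rw [hB]; ring
    linarith
  have hpos : ∀ t, 0 ≤ B ^ t * ε := fun t => hε.trans (hp t)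
  -- forward propagation, for all colours but the one ending the block
  have hF : ∀ i ≤ m, ∀ c ∈ σ, (c ≠ J i ∨ i = m) → -(B ^ i * ε) ≤ a i c := by
    intro i
    induction i with
    | zero =>
      intro hi c hc h
      have := hN 0 hi c hc h (by intro i' h; omega)
      have := hp 0
      linarith
    | succ i ih =>
      intro hi c hc h
      by_cases hcJ : c = J i
      · subst hcJ
        have h1 := hjun i (by omega)
        have h2 := le_of_sum_zero (hpos i) (hS i (by omega)) (hJ i (by omega))
          (fun c hc hcb => ih (by omega) c hc (Or.inl hcb))
        have := hpp i
        linarith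
      · have := hN (i + 1) hi c hc h (by intro i' h; obtain rfl : i = i' := by omega
                                         exact hcJ)
        have := hp (i + 1)
        linarith
  -- backward propagation, for all colours
  have hBk : ∀ t ≤ m, ∀ c ∈ σ, -(B ^ (m + t) * ε) ≤ a (m - t) c := by
    intro t
    induction t with
    | zero => intro _ c hc; exact hF m le_rfl c hc (Or.inr rfl)
    | succ t ih =>
      intro ht c hc
      by_cases hcJ : c = J (m - (t + 1))
      · have h1 := hjun (m - (t + 1)) (by omega)
        have e : m - (t + 1) + 1 = m - t := by omega
        rw [e] at h1
        have h2 := le_of_sum_zero (hpos (m + t)) (hS (m - t) (by omega))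
          (hJ (m - (t + 1)) (by omega)) (fun c hc _ => ih (by omega) c hc)
        have := hpp (m + t)
        rw [hcJ]
        rw [← add_assoc]
        linarith
      · have h1 := hF (m - (t + 1)) (by omega) c hc (Or.inl hcJ)
        have h2 : B ^ (m - (t + 1)) * ε ≤ B ^ (m + (t + 1)) * ε :=
          mul_le_mul_of_nonneg_right (pow_le_pow_right₀ hB1 (by omega)) hε
        linarith
  have hL : ∀ i ≤ m, ∀ c ∈ σ, -(B ^ (2 * m) * ε) ≤ a i c := by
    intro i hi c hc
    have h1 := hBk (m - i) (by omega) c hc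
    rw [show m - (m - i) = i by omega] at h1
    have h2 : B ^ (m + (m - i)) * ε ≤ B ^ (2 * m) * ε :=
      mul_le_mul_of_nonneg_right (pow_le_pow_right₀ hB1 (by omega)) hε
    linarith
  intro i hi c hc
  have h1 := hL i hi c hc
  have h2 := le_of_sum_zero (hpos (2 * m)) (hS i hi) hc (fun c hc _ => hL i hi c hc)
  have h3 := hpp (2 * m)
  have h4 : 0 ≤ (σ.card : ℝ) * (B ^ (2 * m) * ε) := mul_nonneg hs (hpos _)
  have h5 : B ^ (2 * m) * ε ≤ B ^ (2 * m + 1) * ε :=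
    mul_le_mul_of_nonneg_right (pow_le_pow_right₀ hB1 (by omega)) hε
  rw [abs_le]
  constructor <;> linarith

/-- If the first `i` quotients of `y` are at least `K`, the term `y i` dominates all earlier ones. -/
theorem dom_low {K : ℝ} (hK : 1 ≤ K) {y : ℕ → ℝ} {i : ℕ} (hy : ∀ j ≤ i, 0 < y j)
    (h : ∀ t < i, K * y t ≤ y (t + 1)) : ∀ j < i, K * y j ≤ y i := by
  induction i with
  | zero => intro j hj; omega
  | succ i ih =>
    intro j hj
    rcases Nat.lt_succ_iff_lt_or_eq.mp hj with hj | rfl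
    · have h1 := ih (fun j hj => hy j (by omega)) (fun t ht => h t (by omega)) j hj
      have h2 := h i (by omega)
      have h3 := hy i (by omega)
      nlinarith
    · exact h j (by omega)

/-- If the quotients of `y` from `i` on are at most `1 / K`, the term `y i` dominates all later ones. -/
theorem dom_high {K : ℝ} (hK : 1 ≤ K) {y : ℕ → ℝ} {i m : ℕ} (hy : ∀ j ≤ m, 0 < y j)
    (h : ∀ t, i ≤ t → t < m → K * y (t + 1) ≤ y t) : ∀ j, i < j → j ≤ m → K * y j ≤ y i := by
  intro j hij
  induction j, hij using Nat.le_induction with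
  | base => intro hj; exact h i le_rfl hj
  | succ j hij ih =>
    intro hj
    have h1 := ih (by omega)
    have h2 := h j (by omega) hj
    have h3 := hy j (by omega)
    nlinarith

/-- In a positive sum `∑ j < m, a j * y j` with `|a j| ≤ M`, the terms outside `S`, all of them
dominated by `Y` up to the factor `K`, may be discarded at the cost of `m * M / K * Y`. -/
theorem main_terms {K M Y : ℝ} (hK : 1 ≤ K) (hM : 0 ≤ M) (hY : 0 ≤ Y) {a y : ℕ → ℝ}
    {m : ℕ} {S : Finset ℕ} (hS : S ⊆ Finset.range m) (hy : ∀ j < m, 0 < y j)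
    (ha : ∀ j < m, |a j| ≤ M) (hd : ∀ j < m, j ∉ S → K * y j ≤ Y)
    (h0 : 0 < ∑ j ∈ Finset.range m, a j * y j) :
    0 < ∑ j ∈ S, a j * y j + m * M / K * Y := by
  rw [← Finset.sum_sdiff hS] at h0
  have hK0 : 0 < K := by linarith
  have h1 : ∑ j ∈ Finset.range m \ S, a j * y j ≤ ∑ j ∈ Finset.range m \ S, M / K * Y := by
    refine Finset.sum_le_sum fun j hj => ?_
    rw [Finset.mem_sdiff, Finset.mem_range] at hj
    have e1 := hd j hj.1 hj.2
    have e2 := hy j hj.1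
    calc a j * y j ≤ M * y j :=
          mul_le_mul_of_nonneg_right ((le_abs_self _).trans (ha j hj.1)) e2.le
      _ = M / K * (K * y j) := by field_simp
      _ ≤ M / K * Y := mul_le_mul_of_nonneg_left e1 (by positivity)
  rw [Finset.sum_const, nsmul_eq_mul] at h1
  have h2 : ((Finset.range m \ S).card : ℝ) ≤ m := by
    have := Finset.card_le_card (Finset.sdiff_subset : Finset.range m \ S ⊆ Finset.range m)
    rw [Finset.card_range] at this
    exact_mod_cast this
  have h3 : 0 ≤ M / K * Y := by positivity
  have h4 : m * M / K * Y = m * (M / K * Y) := by ring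
  rw [h4]
  nlinarith

/-- If there is a chain of length `m + 1`, the colour classes cannot be separated by linear
functionals with sum zero. In coordinates rescaled along the chain, each row at an interior
occurrence of a block is dominated by the coordinate belonging to that block, and each junction row
by two equal consecutive coordinates; so separation implies the hypotheses of `chain_bound` with
`ε` proportional to `M / K`, where `M` is the largest coefficient. For large `K` this forces
`M = 0`. -/
theorem no_sep_of_ch {ι κ : Type*} [DecidableEq ι] [LinearOrder κ] {Q : ι → Finset κ}
    {σ : Finset ι} {K : ℝ} (m : ℕ)
    (hK : (m + 1) * ((σ.card : ℝ) + 2) ^ (2 * m + 1) < K)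
    {x : κ → ℕ → ℝ} (hx : StretchedArray K (m + 1) x) (hCh : ColorChain Q σ (m + 1) none ⊥) {f : ι → ℕ → ℝ}
    (hf0 : ∀ i ≤ m, ∑ c ∈ σ, f c i = 0)
    (hf : ∀ c ∈ σ, ∀ l ∈ Q c, 0 < ∑ i ∈ Finset.range (m + 1), f c i * x l i) : False := by
  have hs : (0 : ℝ) ≤ σ.card := Nat.cast_nonneg _
  have hB1 : (1 : ℝ) ≤ ((σ.card : ℝ) + 2) ^ (2 * m + 1) := one_le_pow₀ (by linarith)
  have hm0 : (0 : ℝ) ≤ m := Nat.cast_nonneg _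
  have hK1 : 1 ≤ K := by nlinarith
  have hK0 : 0 < K := by linarith
  obtain ⟨J, E, hJ, hE, -, -, hlt, hstep⟩ := ColorChain.unroll m none ⊥ (by intro c _ h; cases h) hCh
  set k : ℕ → κ := fun i => E i (J i) with hk
  have hkk : ∀ i < m, k i < k (i + 1) := fun i hi =>
    (hstep i hi).2.2 _ (hJ (i + 1) (by omega)) (hstep i hi).2.1
  have hkmono : ∀ j ≤ m, ∀ i ≤ j, k i ≤ k j := by
    intro j
    induction j with
    | zero => intro _ i hi; rw [Nat.le_zero.mp hi]
    | succ j ih =>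
      intro hj i hi
      rcases Nat.le_succ_iff.mp hi with h | rfl
      · exact (ih (by omega) i h).trans (hkk j (by omega)).le
      · exact le_rfl
  -- rescaling the coordinates so that consecutive ones agree at the junctions
  let τ : ℕ → ℝ := fun i => ∏ t ∈ Finset.range i, x (k t) (t + 1) / x (k t) t
  have hτ1 : ∀ i, τ (i + 1) = τ i * (x (k i) (i + 1) / x (k i) i) := fun i =>
    Finset.prod_range_succ _ _
  have hxp : ∀ l, ∀ i ≤ m, 0 < x l i := fun l i hi => hx.pos l i (by omega)
  have hτ : ∀ i ≤ m, 0 < τ i := fun i hi => Finset.prod_pos fun t ht => by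
    have := Finset.mem_range.mp ht
    exact div_pos (hxp _ _ (by omega)) (hxp _ _ (by omega))
  let y : κ → ℕ → ℝ := fun l i => x l i / τ i
  have hy : ∀ l, ∀ i ≤ m, 0 < y l i := fun l i hi => div_pos (hxp l i hi) (hτ i hi)
  have hys : ∀ l, ∀ i < m, y l (i + 1) = x l (i + 1) * x (k i) i / (τ i * x (k i) (i + 1)) := by
    intro l i hi
    have h1 := hxp (k i) i (by omega)
    have h2 := hxp (k i) (i + 1) (by omega)
    have h3 := hτ i (by omega)
    show x l (i + 1) / τ (i + 1) = _
    rw [hτ1]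
    field_simp
  have hyi : ∀ l, ∀ i < m, y l i = x (k i) (i + 1) * x l i / (τ i * x (k i) (i + 1)) := by
    intro l i hi
    have h2 := hxp (k i) (i + 1) (by omega)
    have h3 := hτ i (by omega)
    show x l i / τ i = _
    field_simp
  have hden : ∀ i < m, 0 < τ i * x (k i) (i + 1) := fun i hi =>
    mul_pos (hτ i (by omega)) (hxp _ _ (by omega))
  have ylt : ∀ l, ∀ i < m, l < k i → K * y l (i + 1) ≤ y l i := by
    intro l i hi hl
    rw [hys l i hi, hyi l i hi, mul_div_assoc']
    exact div_le_div_of_nonneg_right (hx.grow i (by omega) l (k i) hl) (hden i hi).le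
  have ygt : ∀ l, ∀ i < m, k i < l → K * y l i ≤ y l (i + 1) := by
    intro l i hi hl
    rw [hys l i hi, hyi l i hi, mul_div_assoc']
    exact div_le_div_of_nonneg_right (hx.grow i (by omega) (k i) l hl) (hden i hi).le
  have yeq : ∀ i < m, y (k i) i = y (k i) (i + 1) := by
    intro i hi
    rw [hys _ i hi, hyi _ i hi]
  let a : ℕ → ι → ℝ := fun i c => f c i * τ i
  have hsum : ∀ c ∈ σ, ∀ l ∈ Q c, 0 < ∑ i ∈ Finset.range (m + 1), a i c * y l i := by
    intro c hc l hl
    have := hf c hc l hl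
    refine this.trans_le (le_of_eq (Finset.sum_congr rfl fun i hi => ?_))
    have := hτ i (by have := Finset.mem_range.mp hi; omega)
    show f c i * x l i = f c i * τ i * (x l i / τ i)
    field_simp
  obtain ⟨q, hq, hqmax⟩ := Finset.exists_max_image (Finset.range (m + 1) ×ˢ σ)
    (fun q => |a q.1 q.2|) ⟨(0, J 0), Finset.mem_product.mpr
      ⟨Finset.mem_range.mpr (by omega), hJ 0 (by omega)⟩⟩
  rw [Finset.mem_product, Finset.mem_range] at hq
  set M := |a q.1 q.2| with hM
  have hM0 : 0 ≤ M := abs_nonneg _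
  have haM : ∀ c ∈ σ, ∀ i < m + 1, |a i c| ≤ M := fun c hc i hi =>
    hqmax (i, c) (Finset.mem_product.mpr ⟨Finset.mem_range.mpr hi, hc⟩)
  set ε : ℝ := (m + 1 : ℕ) * M / K with hε
  have hε0 : 0 ≤ ε := by positivity
  have hbound := chain_bound hε0 m hJ (a := a) (J := J) (σ := σ) ?_ ?_ ?_
  · have h1 := hbound q.1 (by omega) q.2 hq.2
    rw [← hM] at h1
    have h2 : K * M ≤ (m + 1) * ((σ.card : ℝ) + 2) ^ (2 * m + 1) * M := by
      have := mul_le_mul_of_nonneg_left h1 hK0.le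
      refine this.trans (le_of_eq ?_)
      rw [hε]
      push_cast
      field_simp
    have h3 : M = 0 := by
      rcases hM0.eq_or_lt with h | h
      · exact h.symm
      · exact absurd (le_of_mul_le_mul_right h2 h) (not_le.mpr hK)
    have h4 := hsum (J 0) (hJ 0 (by omega)) _ (hE 0 (by omega) _ (hJ 0 (by omega)))
    refine absurd h4 (not_lt.mpr (le_of_eq (Finset.sum_eq_zero fun i hi => ?_)))
    have h5 := haM (J 0) (hJ 0 (by omega)) i (Finset.mem_range.mp hi)
    rw [h3] at h5
    rw [abs_nonpos_iff.mp h5, zero_mul]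
  · intro i hi
    show ∑ c ∈ σ, f c i * τ i = 0
    rw [← Finset.sum_mul, hf0 i hi, zero_mul]
  · intro i hi
    have h1 := hsum (J i) (hJ i (by omega)) (k i) (hE i (by omega) _ (hJ i (by omega)))
    have h2 := main_terms hK1 hM0 (hy (k i) i (by omega)).le (S := {i, i + 1})
      (by intro j hj; simp at hj; simp; omega) (fun j hj => hy (k i) j (by omega))
      (haM (J i) (hJ i (by omega))) ?_ h1
    · rw [Finset.sum_pair (by omega), ← yeq i hi, ← add_mul, ← add_mul, ← hε] at h2
      have := (mul_pos_iff_of_pos_right (hy (k i) i (by omega))).mp h2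
      linarith
    · intro j hj hjS
      simp only [Finset.mem_insert, Finset.mem_singleton, not_or] at hjS
      rcases lt_or_gt_of_ne hjS.1 with h | h
      · refine dom_low hK1 (fun j hj => hy _ j (by omega)) (fun t ht => ?_) j h
        exact ygt _ t (by omega) ((hkk t (by omega)).trans_le (hkmono i (by omega) (t + 1) ht))
      · rw [yeq i hi]
        refine dom_high hK1 (m := m) (fun j hj => hy _ j hj) (fun t ht htm => ?_) j (by omega)
          (by omega)
        exact ylt _ t htm ((hkk i hi).trans_le (hkmono t (by omega) (i + 1) ht))
  · intro i hi c hc hcJ hcJ'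
    have h1 := hsum c hc _ (hE i hi c hc)
    have h2 := main_terms hK1 hM0 (hy (E i c) i hi).le (S := {i})
      (by intro j hj; simp at hj; simp; omega) (fun j hj => hy _ j (by omega))
      (haM c hc) ?_ h1
    · rw [Finset.sum_singleton, ← add_mul, ← hε] at h2
      have := (mul_pos_iff_of_pos_right (hy (E i c) i hi)).mp h2
      linarith
    · intro j hj hjS
      rw [Finset.mem_singleton] at hjS
      rcases lt_or_gt_of_ne hjS with h | h
      · obtain ⟨i', rfl⟩ : ∃ i', i = i' + 1 := ⟨i - 1, by omega⟩
        have hk1 : k i' < E (i' + 1) c := (hstep i' (by omega)).2.2 c hc (hcJ' i' rfl)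
        refine dom_low hK1 (fun j hj => hy _ j (by omega)) (fun t ht => ?_) j h
        exact ygt _ t (by omega) ((hkmono i' (by omega) t (by omega)).trans_lt hk1)
      · have hk1 : E i c < k i := hlt i hi c hc (by
          rcases hcJ with h | h
          · exact h
          · omega)
        refine dom_high hK1 (m := m) (fun j hj => hy _ j hj) (fun t ht htm => ?_) j h (by omega)
        exact ylt _ t htm (hk1.trans_le (hkmono t (by omega) i ht))

/-! ### Convex hulls and chains -/

/-- Homogeneous coordinates `(1, q)` of a point `q` of `ℝ^d`. -/
def lift {d : ℕ} (q : Pt d) : Fin (d + 1) → ℝ := Fin.cons 1 q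

theorem dot_lift {d : ℕ} (u : Fin (d + 1) → ℝ) (q : Pt d) :
    u ⬝ᵥ lift q = u 0 + ∑ j : Fin d, u j.succ * q j := by
  simp [dotProduct, lift, Fin.sum_univ_succ]

theorem convex_pos_lift {d : ℕ} (u : Fin (d + 1) → ℝ) :
    Convex ℝ {q : Pt d | 0 < u ⬝ᵥ lift q} := by
  intro q hq r hr a b ha hb hab
  simp only [Set.mem_ofPred_eq] at *
  have : u ⬝ᵥ lift (a • q + b • r) = a * (u ⬝ᵥ lift q) + b * (u ⬝ᵥ lift r) := by
    simp only [dot_lift, mul_add, Finset.mul_sum, Pi.add_apply, Pi.smul_apply, smul_eq_mul,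
      Finset.sum_add_distrib]
    have e : u 0 = a * u 0 + b * u 0 := by rw [← add_mul, hab, one_mul]
    have e1 : ∀ (t : ℝ) (q : Pt d), ∑ j : Fin d, u j.succ * (t * q j) =
        ∑ j : Fin d, t * (u j.succ * q j) := fun t q =>
      Finset.sum_congr rfl fun j _ => by ring
    rw [e1, e1]
    linarith
  rw [this]
  rcases ha.eq_or_lt with rfl | ha
  · have : b = 1 := by linarith
    subst this; linarith
  · have := mul_pos ha hq
    have := mul_nonneg hb hr.le
    linarith

/-- Separation of several polytopes without a common point: some affine functionals `u c` with
sum zero are positive on the respective sets. They are obtained by strictly separating the product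
of the polytopes from the diagonal. -/
theorem exists_sep {d : ℕ} {ι : Type*} [Fintype ι] [DecidableEq ι] [Nonempty ι]
    (S : ι → Finset (Pt d)) (hS : ∀ c, (S c).Nonempty)
    (h : ¬ (⋂ c, convexHull ℝ (S c : Set (Pt d))).Nonempty) :
    ∃ u : ι → Fin (d + 1) → ℝ, ∑ c, u c = 0 ∧ ∀ c, ∀ q ∈ S c, 0 < u c ⬝ᵥ lift q := by
  let D : Submodule ℝ (ι → Pt d) :=
    LinearMap.range (LinearMap.pi (fun _ : ι => (LinearMap.id : Pt d →ₗ[ℝ] Pt d)))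
  have hconv : Convex ℝ (Set.univ.pi fun c => convexHull ℝ (S c : Set (Pt d))) :=
    convex_pi fun c _ => convex_convexHull ℝ _
  have hcomp : IsCompact (Set.univ.pi fun c => convexHull ℝ (S c : Set (Pt d))) :=
    isCompact_univ_pi fun c => (S c).finite_toSet.isCompact_convexHull (𝕜 := ℝ)
  have hdisj : Disjoint (Set.univ.pi fun c => convexHull ℝ (S c : Set (Pt d)))
      (D : Set (ι → Pt d)) := by
    rw [Set.disjoint_left]
    rintro _ h1 ⟨q, rfl⟩
    exact h ⟨q, Set.mem_iInter.mpr fun c => h1 c (Set.mem_univ c)⟩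
  obtain ⟨f, u, v, hfu, huv, hfv⟩ := geometric_hahn_banach_compact_closed hconv hcomp
    D.convex D.closed_of_finiteDimensional hdisj
  have hv : v < 0 := by simpa using hfv 0 D.zero_mem
  have hD : ∀ q ∈ D, f q = 0 := by
    intro q hq
    by_contra hne
    have h1 := hfv ((v / f q) • q) (D.smul_mem _ hq)
    rw [map_smul, smul_eq_mul, div_mul_cancel₀ _ hne] at h1
    exact lt_irrefl _ h1
  let F : ι → Pt d → ℝ := fun c q => f (Pi.single c q)
  have hFsum : ∀ a : ι → Pt d, f a = ∑ c, F c (a c) := by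
    intro a
    conv_lhs => rw [← Finset.univ_sum_single a]
    rw [map_sum]
  have hFlin : ∀ c q, F c q = ∑ j, F c (Pi.single j 1) * q j := by
    intro c q
    let G : Pt d →ₗ[ℝ] ℝ := f.toLinearMap ∘ₗ LinearMap.single ℝ (fun _ => Pt d) c
    show G q = ∑ j, G (Pi.single j 1) * q j
    conv_lhs => rw [← Finset.univ_sum_single q]
    rw [map_sum]
    refine Finset.sum_congr rfl fun j _ => ?_
    have : (Pi.single j (q j) : Pt d) = q j • Pi.single j 1 := by
      rw [← Pi.single_smul]; simp
    rw [this, map_smul, smul_eq_mul, mul_comm]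
  -- each `F c` is bounded on `S c` by its maximum; the slack `-∑ F c (k c)` is shared equally
  have hk : ∀ c, ∃ k ∈ S c, ∀ q ∈ S c, F c q ≤ F c k := fun c =>
    Finset.exists_max_image (S c) (F c) (hS c)
  choose k hkS hkmax using hk
  have hneg : ∑ c, F c (k c) < 0 := by
    rw [← hFsum]
    exact (hfu k fun c _ => subset_convexHull ℝ _ (hkS c)).trans (huv.trans hv)
  set δ : ℝ := -(∑ c, F c (k c)) / Fintype.card ι with hδ
  have hcard : (0 : ℝ) < Fintype.card ι := by exact_mod_cast Fintype.card_pos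
  have hδ0 : 0 < δ := div_pos (by linarith) hcard
  refine ⟨fun c => Fin.cons (F c (k c) + δ) (fun j => - F c (Pi.single j 1)), ?_, ?_⟩
  · ext i
    rw [Finset.sum_apply]
    refine Fin.cases ?_ (fun j => ?_) i
    · simp only [Fin.cons_zero, Finset.sum_add_distrib, Finset.sum_const, Finset.card_univ,
        nsmul_eq_mul, Pi.zero_apply]
      rw [hδ, mul_div_cancel₀ _ hcard.ne']
      ring
    · simp only [Fin.cons_succ, Pi.zero_apply, Finset.sum_neg_distrib, neg_eq_zero]
      rw [← hFsum (fun _ => Pi.single j 1)]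
      exact hD _ ⟨Pi.single j 1, rfl⟩
  · intro c q hq
    rw [dot_lift]
    simp only [Fin.cons_zero, Fin.cons_succ, neg_mul, Finset.sum_neg_distrib]
    rw [← hFlin]
    have := hkmax c q hq
    linarith

/-- The point sequence `p` is `K`-stretched: in suitable homogeneous coordinates (obtained from
the standard ones by the invertible matrix `N`) it is a `K`-stretched array. -/
def StretchedPts {κ : Type*} [LinearOrder κ] {d : ℕ} (K : ℝ) (p : κ → Pt d) : Prop :=
  ∃ (N : Matrix (Fin (d + 1)) (Fin (d + 1)) ℝ) (x : κ → ℕ → ℝ), N.det ≠ 0 ∧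
    (∀ k, ∀ i : Fin (d + 1), x k i = (N.mulVec (lift (p k))) i) ∧ StretchedArray K (d + 1) x

theorem ColorChain.nonempty {ι κ : Type*} [LinearOrder κ] {Q : ι → Finset κ}
    {σ : Finset ι} {m : ℕ} (h : ColorChain Q σ (m + 1) none ⊥) : ∀ c ∈ σ, (Q c).Nonempty := by
  obtain ⟨b, hb, -, k, hk, -, h, -⟩ := h
  intro c hc
  by_cases hcb : c = b
  · exact ⟨k, hcb ▸ hk⟩
  · obtain ⟨l, hl, -⟩ := h c hc (by simp) hcb
    exact ⟨l, hl⟩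

/-- The combinatorial criterion: for a sufficiently stretched sequence of points in `ℝ^d`, the
convex hulls of at least two disjoint classes meet if and only if the classes have a colourful
chain of length `d + 1`. -/
theorem hulls_meet_iff {ι κ : Type*} [DecidableEq ι] [LinearOrder κ] {d : ℕ} {K L : ℝ}
    {p : κ → Pt d} (hp : StretchedPts K p) {Q : ι → Finset κ} {σ : Finset ι} (hσ : 2 ≤ σ.card)
    (hdisj : ∀ a b, a ≠ b → Disjoint (Q a) (Q b))
    (hL : 4 * ((σ.card : ℝ) + 1) * 2 ^ (d + 1) ≤ L) (hLK : L ^ 2 ≤ K)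
    (hK : (d + 1) * ((σ.card : ℝ) + 2) ^ (2 * d + 1) < K) :
    (⋂ c ∈ σ, convexHull ℝ (p '' (Q c : Set κ))).Nonempty ↔ ColorChain Q σ (d + 1) none ⊥ := by
  obtain ⟨N, x, hN, hx, hStr⟩ := hp
  have hdot : ∀ (g : ℕ → ℝ) (l : κ), ∑ i ∈ Finset.range (d + 1), g i * x l i =
      (Matrix.vecMul (fun i : Fin (d + 1) => g i) N) ⬝ᵥ lift (p l) := by
    intro g l
    rw [← Matrix.dotProduct_mulVec, Finset.sum_range]
    exact Finset.sum_congr rfl fun i _ => by rw [hx]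
  constructor
  · rintro ⟨z, hz⟩
    by_contra hCh
    obtain ⟨f, θ, -, -, hf0, hT, hf⟩ := sep_of_not_ch hσ hdisj (d + 1) hL hLK x hStr none ⊥ hCh
    have hpos : ∀ c ∈ σ, 0 < (Matrix.vecMul (fun i : Fin (d + 1) => f c i) N) ⬝ᵥ lift z := by
      intro c hc
      have hzc := Set.mem_iInter₂.mp hz c hc
      refine convexHull_min ?_ (convex_pos_lift _) hzc
      rintro _ ⟨l, hl, rfl⟩
      rw [Set.mem_ofPred_eq, ← hdot]
      refine lt_of_lt_of_le ?_ (hf c hc l hl (Or.inl (WithBot.bot_lt_coe l)))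
      have := hT l
      positivity
    have hne : σ.Nonempty := Finset.card_pos.mp (by omega)
    have h1 := Finset.sum_pos hpos hne
    rw [← sum_dotProduct, ← Matrix.sum_vecMul] at h1
    have h2 : (∑ c ∈ σ, fun i : Fin (d + 1) => f c i) = 0 := by
      ext i
      rw [Finset.sum_apply]
      exact hf0 i
    rw [h2, Matrix.zero_vecMul, zero_dotProduct] at h1
    exact lt_irrefl _ h1
  · intro hCh
    by_contra hem
    have hne : σ.Nonempty := Finset.card_pos.mp (by omega)
    classical
    have : Nonempty σ := hne.to_subtype
    obtain ⟨u, hu0, hu⟩ := exists_sep (fun c : σ => (Q c).image p)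
      (fun c => (hCh.nonempty c c.2).image p) (by
        rintro ⟨z, hz⟩
        refine hem ⟨z, Set.mem_iInter₂.mpr fun c hc => ?_⟩
        have := Set.mem_iInter.mp hz ⟨c, hc⟩
        rwa [Finset.coe_image] at this)
    have hNu : IsUnit N.det := isUnit_iff_ne_zero.mpr hN
    let w : σ → Fin (d + 1) → ℝ := fun c => Matrix.vecMul (u c) N⁻¹
    have hw : ∀ c, Matrix.vecMul (w c) N = u c := fun c => by
      rw [Matrix.vecMul_vecMul, Matrix.nonsing_inv_mul _ hNu, Matrix.vecMul_one]
    have hw0 : ∑ c, w c = 0 := by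
      rw [← Matrix.sum_vecMul, hu0, Matrix.zero_vecMul]
    let f : ι → ℕ → ℝ := fun c i =>
      if h : c ∈ σ ∧ i < d + 1 then w ⟨c, h.1⟩ ⟨i, h.2⟩ else 0
    have hfw : ∀ (c : σ), (fun i : Fin (d + 1) => f c i) = w c := by
      intro c
      ext i
      exact dif_pos ⟨c.2, i.2⟩
    refine no_sep_of_ch d hK hStr hCh (f := f) ?_ ?_
    · intro i hi
      rw [← Finset.sum_coe_sort]
      have := congrFun hw0 ⟨i, by omega⟩
      rw [Finset.sum_apply, Pi.zero_apply] at this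
      rw [← this]
      · exact Finset.sum_congr rfl fun c _ => congrFun (hfw c) ⟨i, by omega⟩
    · intro c hc l hl
      rw [hdot, hfw ⟨c, hc⟩, hw]
      exact hu ⟨c, hc⟩ _ (Finset.mem_image_of_mem p hl)

/-! ### Stretched sequences on the moment curve -/

/-- The point `(t, t², …, t^d)` of the moment curve. -/
def moment (d : ℕ) (t : ℝ) : Pt d := fun i => t ^ (i.1 + 1)

theorem lift_moment (d : ℕ) (t : ℝ) (i : Fin (d + 1)) : lift (moment d t) i = t ^ i.1 := by
  refine Fin.cases ?_ (fun j => ?_) i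
  · simp [lift]
  · simp [lift, moment]

theorem moment_genPos {d : ℕ} (hd : 1 ≤ d) {P : Finset (Pt d)}
    (hP : ∀ q ∈ P, ∃ t, q = moment d t) : GenPos P := by
  intro S hS hcard
  have hSP : ∀ q : (S : Set (Pt d)), (q : Pt d) = moment d ((q : Pt d) ⟨0, hd⟩) := by
    rintro ⟨q, hq⟩
    obtain ⟨t, rfl⟩ := hP q (hS hq)
    simp [moment]
  set τ : ↥(S : Set (Pt d)) → ℝ := fun q => (q : Pt d) ⟨0, hd⟩ with hτ
  have hinj : Function.Injective τ := by
    intro q r h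
    apply Subtype.ext
    rw [hSP q, hSP r]
    exact congrArg _ h
  rw [affineIndependent_iff]
  intro s w hw0 hw1 e he
  classical
  -- a polynomial of degree at most `d` vanishing at all parameters but that of `e`
  let Φ : Polynomial ℝ := ∏ y ∈ s.erase e, (Polynomial.X - Polynomial.C (τ y))
  have hdeg : Φ.natDegree < d + 1 := by
    have h1 : Φ.natDegree = (s.erase e).card := by
      rw [Polynomial.natDegree_prod_of_monic _ _ (fun y _ => Polynomial.monic_X_sub_C _)]
      simp
    have h2 : s.card ≤ S.card := by
      have := Finset.card_le_univ s
      simpa using this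
    have h3 := Finset.card_erase_lt_of_mem he
    omega
  have h1 : ∀ q : (S : Set (Pt d)), Φ.eval (τ q) =
      Φ.coeff 0 + ∑ j : Fin d, Φ.coeff (j.1 + 1) * (q : Pt d) j := by
    intro q
    rw [Polynomial.eval_eq_sum_range' hdeg, Finset.sum_range, Fin.sum_univ_succ]
    simp only [Fin.val_zero, pow_zero, mul_one, Fin.val_succ]
    congr 1
    refine Finset.sum_congr rfl fun j _ => ?_
    rw [show (q : Pt d) j = τ q ^ (j.1 + 1) from congrFun (hSP q) j]
  have h2 : ∑ q ∈ s, w q * Φ.eval (τ q) = 0 := by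
    simp only [h1, mul_add, Finset.sum_add_distrib, Finset.mul_sum]
    rw [← Finset.sum_mul, hw0, zero_mul, zero_add, Finset.sum_comm]
    refine Finset.sum_eq_zero fun j _ => ?_
    have h3 := congrFun hw1 j
    rw [Finset.sum_apply] at h3
    simp only [Pi.smul_apply, smul_eq_mul, Pi.zero_apply] at h3
    have : ∑ q ∈ s, w q * (Φ.coeff (j.1 + 1) * (q : Pt d) j) =
        Φ.coeff (j.1 + 1) * ∑ q ∈ s, w q * (q : Pt d) j := by
      rw [Finset.mul_sum]
      exact Finset.sum_congr rfl fun q _ => by ring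
    rw [this, h3, mul_zero]
  rw [Finset.sum_eq_single e] at h2
  · rcases mul_eq_zero.mp h2 with h | h
    · exact h
    · exfalso
      rw [Polynomial.eval_prod, Finset.prod_eq_zero_iff] at h
      obtain ⟨y, hy, h⟩ := h
      simp only [Polynomial.eval_sub, Polynomial.eval_X, Polynomial.eval_C] at h
      exact Finset.ne_of_mem_erase hy (hinj (show τ y = τ e by linarith))
  · intro q hq hqe
    rw [Polynomial.eval_prod, Finset.prod_eq_zero (Finset.mem_erase.mpr ⟨hqe, hq⟩), mul_zero]
    simp
  · intro h; exact absurd he h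

/-- The points of the moment curve with parameters `K ^ k` form a `K`-stretched sequence in
general position. -/
theorem exists_moment (d : ℕ) {K : ℝ} (hd : 1 ≤ d) (hK : 2 ≤ K) (N : ℕ) :
    ∃ p : Fin N → Pt d, Function.Injective p ∧ (∀ P : Finset (Pt d), (∀ q ∈ P, ∃ k, q = p k) →
      GenPos P) ∧ StretchedPts K p := by
  have hK0 : 0 < K := by linarith
  refine ⟨fun k => moment d (K ^ k.1), ?_, ?_, 1, fun k i => (K ^ k.1) ^ i, ?_, ?_, ?_, ?_⟩
  · intro k l h
    have := congrFun h ⟨0, hd⟩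
    simp only [moment, zero_add, pow_one] at this
    exact Fin.ext (pow_right_injective₀ hK0 (by linarith) this)
  · intro P hP
    refine moment_genPos hd fun q hq => ?_
    obtain ⟨k, hk⟩ := hP q hq
    exact ⟨_, hk⟩
  · simp
  · intro k i
    rw [Matrix.one_mulVec, lift_moment]
  · intro k i _
    positivity
  · intro i _ l l' hl
    have h1 : K * K ^ l.1 ≤ K ^ l'.1 := by
      rw [← pow_succ']
      exact pow_le_pow_right₀ (by linarith) hl
    rw [pow_succ, pow_succ]
    calc K * ((K ^ l.1) ^ i * K ^ l.1 * (K ^ l'.1) ^ i) =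
        (K * K ^ l.1) * ((K ^ l.1) ^ i * (K ^ l'.1) ^ i) := by ring
      _ ≤ K ^ l'.1 * ((K ^ l.1) ^ i * (K ^ l'.1) ^ i) :=
        mul_le_mul_of_nonneg_right h1 (by positivity)
      _ = _ := by ring

/-! ### Brackets and the Grassmann–Plücker relation -/

/-- The bracket `[x, y]` obtained from an alternating form by filling the slots `i` and `i + 1`
with `x` and `y`, and the other slots from `u`. -/
def psi {d : ℕ} (ω : (Fin (d + 1) → ℝ) [⋀^Fin (d + 1)]→ₗ[ℝ] ℝ) (i : Fin d)
    (u : Fin (d + 1) → Fin (d + 1) → ℝ) (x y : Fin (d + 1) → ℝ) : ℝ :=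
  ω (Function.update (Function.update u i.castSucc x) i.succ y)

section
variable {d : ℕ} (ω : (Fin (d + 1) → ℝ) [⋀^Fin (d + 1)]→ₗ[ℝ] ℝ) (i : Fin d)
  (u : Fin (d + 1) → Fin (d + 1) → ℝ)

/-- Vectors on which an alternating form of top degree does not vanish span the space. -/
theorem exists_coord {v : Fin (d + 1) → Fin (d + 1) → ℝ} (hv : ω v ≠ 0) (c : Fin (d + 1) → ℝ) :
    ∃ γ : Fin (d + 1) → ℝ, ∑ r, γ r • v r = c := by
  have hli : LinearIndependent ℝ v := by
    by_contra h
    exact hv (ω.map_linearDependent v h)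
  have hsp := hli.span_eq_top_of_card_eq_finrank (by simp)
  have : c ∈ Submodule.span ℝ (Set.range v) := by rw [hsp]; trivial
  exact (Submodule.mem_span_range_iff_exists_fun ℝ).mp this

theorem psi_self (x : Fin (d + 1) → ℝ) : psi ω i u x x = 0 := by
  have hne : i.castSucc ≠ i.succ := (Fin.castSucc_lt_succ).ne
  refine ω.map_eq_zero_of_eq _ ?_ hne
  simp [Function.update_of_ne hne]

theorem psi_swap (x y : Fin (d + 1) → ℝ) : psi ω i u x y = - psi ω i u y x := by
  have hne : i.castSucc ≠ i.succ := (Fin.castSucc_lt_succ).ne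
  unfold psi
  rw [← ω.map_swap _ hne]
  congr 1
  ext r : 1
  simp only [Function.comp_apply]
  by_cases h1 : r = i.castSucc
  · subst h1
    simp [Function.update_of_ne hne]
  · by_cases h2 : r = i.succ
    · subst h2
      simp [Function.update_of_ne hne]
    · rw [Equiv.swap_apply_of_ne_of_ne h1 h2]
      simp [Function.update_of_ne h1, Function.update_of_ne h2]

theorem psi_sum_left (γ : Fin (d + 1) → ℝ) (v : Fin (d + 1) → Fin (d + 1) → ℝ)
    (y : Fin (d + 1) → ℝ) : psi ω i u (∑ r, γ r • v r) y = ∑ r, γ r * psi ω i u (v r) y := by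
  have hne : i.castSucc ≠ i.succ := (Fin.castSucc_lt_succ).ne
  unfold psi
  simp only [Function.update_comm hne]
  rw [ω.map_update_sum]
  simp only [ω.map_update_smul, smul_eq_mul]

/-- The three-term Grassmann–Plücker relation for the brackets `[x, y]`. -/
theorem plucker {a b : Fin (d + 1) → ℝ} (hab : psi ω i u a b ≠ 0) (c y : Fin (d + 1) → ℝ) :
    psi ω i u c y * psi ω i u a b =
      psi ω i u c b * psi ω i u a y + psi ω i u a c * psi ω i u b y := by
  have hne : i.castSucc ≠ i.succ := (Fin.castSucc_lt_succ).ne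
  obtain ⟨γ, hγ⟩ := exists_coord ω hab c
  have key : ∀ y, psi ω i u c y =
      γ i.castSucc * psi ω i u a y + γ i.succ * psi ω i u b y := by
    intro y
    rw [← hγ, psi_sum_left, Finset.sum_eq_add i.castSucc i.succ hne]
    · simp [Function.update_of_ne hne]
    · rintro r - ⟨h1, h2⟩
      rw [Function.update_of_ne h2, Function.update_of_ne h1]
      refine mul_eq_zero_of_right _ (ω.map_eq_zero_of_eq _ ?_ h1)
      simp [Function.update_of_ne hne, Function.update_of_ne h1, Function.update_of_ne h2]
    · simp
    · simp
  have e1 := key b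
  have e2 := key a
  rw [psi_self, mul_zero, add_zero] at e1
  rw [psi_self, mul_zero, zero_add, psi_swap ω i u c a, psi_swap ω i u b a] at e2
  rw [key y, e1]
  linear_combination (psi ω i u b y) * e2

/-- For vectors `H 0, …, H (d + 2)`, a lower bound by `2` for the cross-ratio of the four
consecutive vectors starting at `H i`, the brackets being completed by the remaining `d - 1`
vectors. The condition is written without division. -/
def Good (H : ℕ → Fin (d + 1) → ℝ) : Prop :=
  let u : Fin (d + 1) → Fin (d + 1) → ℝ := fun r => if r.1 < i.1 then H r else H (r + 2)
  2 * (psi ω i u (H i) (H (i + 1)) * psi ω i u (H (i + 2)) (H (i + 3))) ≤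
    psi ω i u (H i) (H (i + 2)) * psi ω i u (H (i + 1)) (H (i + 3))

theorem Good.congr {H H' : ℕ → Fin (d + 1) → ℝ} (h : ∀ t < d + 3, H t = H' t) :
    Good ω i H ↔ Good ω i H' := by
  have hi := i.2
  unfold Good
  have e : (fun r : Fin (d + 1) => if r.1 < i.1 then H r else H (r + 2)) =
      fun r : Fin (d + 1) => if r.1 < i.1 then H' r else H' (r + 2) := by
    ext r : 1
    have := r.2
    rw [h r (by omega), h (r + 2) (by omega)]
  rw [e, h i (by omega), h (i + 1) (by omega), h (i + 2) (by omega), h (i + 3) (by omega)]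

end

/-- Brackets of vectors taken from `P` in increasing order are positive if the form is positive on
all increasing tuples. -/
theorem psi_pos {d : ℕ} {ω : (Fin (d + 1) → ℝ) [⋀^Fin (d + 1)]→ₗ[ℝ] ℝ} {N : ℕ}
    {P : ℕ → Fin (d + 1) → ℝ}
    (hpos : ∀ g : Fin (d + 1) → ℕ, StrictMono g → (∀ r, g r < N) → 0 < ω (fun r => P (g r)))
    (i : Fin d) {u : Fin (d + 1) → Fin (d + 1) → ℝ} {g : Fin (d + 1) → ℕ}
    (hu : ∀ r, r ≠ i.castSucc → r ≠ i.succ → u r = P (g r)) (hg : StrictMono g)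
    (hgN : ∀ r, g r < N) : 0 < psi ω i u (P (g i.castSucc)) (P (g i.succ)) := by
  refine lt_of_lt_of_eq (hpos g hg hgN) ?_
  unfold psi
  congr 1
  ext r : 1
  by_cases h2 : r = i.succ
  · subst h2; simp
  · by_cases h1 : r = i.castSucc
    · subst h1; simp [Function.update_of_ne h2]
    · rw [Function.update_of_ne h2, Function.update_of_ne h1, hu r h1 h2]

theorem strictMono_splice {d : ℕ} (i : Fin d) {g0 : ℕ → ℕ} {s t e : ℕ}
    (hlo : ∀ r < i.1, g0 r = r) (hhi : ∀ r, i.1 + 2 ≤ r → g0 r = r + e)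
    (h1 : i.1 ≤ s) (h2 : s < t) (h3 : t < i.1 + 2 + e) :
    StrictMono (fun r : Fin (d + 1) => if r.1 = i.1 then s else if r.1 = i.1 + 1 then t else g0 r) := by
  intro r r' hr
  have hr : r.1 < r'.1 := hr
  have a1 := hlo r.1
  have a2 := hlo r'.1
  have a3 := hhi r.1
  have a4 := hhi r'.1
  dsimp only
  split_ifs <;> omega

/-- Positivity of brackets whose frame consists of the first vectors of `P` and of a block shifted
by `e`, for entries with indices in the gap. -/
theorem psi_pos' {d : ℕ} {ω : (Fin (d + 1) → ℝ) [⋀^Fin (d + 1)]→ₗ[ℝ] ℝ} {N : ℕ}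
    {P : ℕ → Fin (d + 1) → ℝ}
    (hpos : ∀ g : Fin (d + 1) → ℕ, StrictMono g → (∀ r, g r < N) → 0 < ω (fun r => P (g r)))
    (i : Fin d) {u : Fin (d + 1) → Fin (d + 1) → ℝ} {e : ℕ}
    (hlo : ∀ r : Fin (d + 1), r.1 < i.1 → u r = P r)
    (hhi : ∀ r : Fin (d + 1), i.1 + 2 ≤ r.1 → u r = P (r + e)) (hN : d + 1 + e ≤ N)
    {s t : ℕ} (h1 : i.1 ≤ s) (h2 : s < t) (h3 : t < i.1 + 2 + e) :
    0 < psi ω i u (P s) (P t) := by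
  have hi := i.2
  have hsm := strictMono_splice i (g0 := fun r => if r < i.1 then r else r + e) (e := e)
    (fun r hr => if_pos hr) (fun r hr => if_neg (by omega)) h1 h2 h3
  have := psi_pos hpos i (u := u) ?_ hsm ?_
  · simpa using this
  · intro r hr1 hr2
    have hr1' : r.1 ≠ i.1 := fun h => hr1 (Fin.ext h)
    have hr2' : r.1 ≠ i.1 + 1 := fun h => hr2 (Fin.ext h)
    rw [if_neg hr1', if_neg hr2']
    split_ifs with h
    · exact hlo r h
    · exact hhi r (by omega)
  · intro r
    have := r.2
    split_ifs <;> omega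

/-- Among `d + 4` vectors on which the form is positive, some `d + 3` are good: two cross-ratios
smaller than `2` on overlapping quadruples of five consecutive vectors contradict the Plücker
relations. -/
theorem exists_good {d : ℕ} {ω : (Fin (d + 1) → ℝ) [⋀^Fin (d + 1)]→ₗ[ℝ] ℝ} {N : ℕ}
    (hN : d + 4 ≤ N) {P : ℕ → Fin (d + 1) → ℝ}
    (hpos : ∀ g : Fin (d + 1) → ℕ, StrictMono g → (∀ r, g r < N) → 0 < ω (fun r => P (g r)))
    (i : Fin d) : ∃ H : ℕ → ℕ, (∀ s t, s < t → t < d + 3 → H s < H t) ∧ (∀ t < d + 3, H t < N) ∧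
      Good ω i (fun t => P (H t)) := by
  by_contra hcon
  push Not at hcon
  have hi := i.2
  -- omitting the fifth, respectively the first, of the five vectors `P i, …, P (i + 4)`
  have g1 := hcon (fun t => if t < i.1 + 4 then t else t + 1)
    (by intro s t _ _; split_ifs <;> omega) (by intro t _; split_ifs <;> omega)
  have g2 := hcon (fun t => if t < i.1 then t else t + 1)
    (by intro s t _ _; split_ifs <;> omega) (by intro t _; split_ifs <;> omega)
  unfold Good at g1 g2
  set u : Fin (d + 1) → Fin (d + 1) → ℝ := fun r => if r.1 < i.1 then P r else P (r + 3) with hu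
  have e1 : (fun r : Fin (d + 1) => if r.1 < i.1 then
      P (if r.1 < i.1 + 4 then r.1 else r.1 + 1) else
      P (if r.1 + 2 < i.1 + 4 then r.1 + 2 else r.1 + 2 + 1)) =
      Function.update (Function.update u i.castSucc (P (i + 2))) i.succ (P (i + 3)) := by
    ext r : 1
    by_cases h2 : r = i.succ
    · subst h2; simp
    · by_cases h1 : r = i.castSucc
      · subst h1; simp [Function.update_of_ne h2]
      · rw [Function.update_of_ne h2, Function.update_of_ne h1, hu]
        have hr1' : r.1 ≠ i.1 := fun h => h1 (Fin.ext h)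
        have hr2' : r.1 ≠ i.1 + 1 := fun h => h2 (Fin.ext h)
        dsimp only
        split_ifs <;> first | rfl | omega
  have e2 : (fun r : Fin (d + 1) => if r.1 < i.1 then
      P (if r.1 < i.1 then r.1 else r.1 + 1) else
      P (if r.1 + 2 < i.1 then r.1 + 2 else r.1 + 2 + 1)) = u := by
    ext r : 1
    rw [hu]
    dsimp only
    split_ifs <;> first | rfl | omega
  have hupd : ∀ a b x y, psi ω i (Function.update (Function.update u i.castSucc a) i.succ b) x y =
      psi ω i u x y := by
    intro a b x y
    have hne : i.castSucc ≠ i.succ := (Fin.castSucc_lt_succ).ne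
    unfold psi
    congr 1
    ext r : 1
    by_cases h2 : r = i.succ
    · subst h2; simp
    · by_cases h1 : r = i.castSucc
      · subst h1; simp [Function.update_of_ne h2]
      · simp [Function.update_of_ne h2, Function.update_of_ne h1]
  dsimp only at g1 g2
  rw [e1] at g1
  rw [e2] at g2
  simp only [hupd] at g1
  rw [if_pos (by omega), if_pos (by omega), if_pos (by omega), if_pos (by omega)] at g1
  rw [if_neg (by omega), if_neg (by omega), if_neg (by omega), if_neg (by omega)] at g2
  have hp : ∀ s t, i.1 ≤ s → s < t → t < i.1 + 5 → 0 < psi ω i u (P s) (P t) :=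
    fun s t h1 h2 h3 => psi_pos' hpos i (e := 3) (fun r hr => if_pos hr)
      (fun r hr => if_neg (by omega)) (by omega) h1 h2 (by omega)
  have p01 := hp i (i + 1) (by omega) (by omega) (by omega)
  have p02 := hp i (i + 2) (by omega) (by omega) (by omega)
  have p04 := hp i (i + 4) (by omega) (by omega) (by omega)
  have p12 := hp (i + 1) (i + 2) (by omega) (by omega) (by omega)
  have p13 := hp (i + 1) (i + 3) (by omega) (by omega) (by omega)
  have p14 := hp (i + 1) (i + 4) (by omega) (by omega) (by omega)
  have p23 := hp (i + 2) (i + 3) (by omega) (by omega) (by omega)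
  have p24 := hp (i + 2) (i + 4) (by omega) (by omega) (by omega)
  have p34 := hp (i + 3) (i + 4) (by omega) (by omega) (by omega)
  have pl1 := plucker ω i u p14.ne' (P (i + 2)) (P (i + 3))
  rw [psi_swap ω i u (P (i + 4)) (P (i + 3))] at pl1
  have pl2 := plucker ω i u p04.ne' (P (i + 1)) (P (i + 2))
  have pl2' := plucker ω i u p14.ne' (P i) (P (i + 2))
  rw [psi_swap ω i u (P (i + 4)) (P (i + 2)), psi_swap ω i u (P (i + 1)) (P i)] at pl2'
  simp only [add_assoc, Nat.reduceAdd, not_le] at g1 g2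
  generalize psi ω i u (P i) (P (i + 1)) = y01 at *
  generalize psi ω i u (P i) (P (i + 2)) = y02 at *
  generalize psi ω i u (P i) (P (i + 4)) = y04 at *
  generalize psi ω i u (P (i + 1)) (P (i + 2)) = y12 at *
  generalize psi ω i u (P (i + 1)) (P (i + 3)) = y13 at *
  generalize psi ω i u (P (i + 1)) (P (i + 4)) = y14 at *
  generalize psi ω i u (P (i + 2)) (P (i + 3)) = y23 at *
  generalize psi ω i u (P (i + 2)) (P (i + 4)) = y24 at *
  generalize psi ω i u (P (i + 3)) (P (i + 4)) = y34 at *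
  have f1 : 2 * (y23 * y14) < y24 * y13 := by nlinarith
  have f2 : y01 * y24 < y02 * y14 := by nlinarith [mul_pos p04 p12]
  have f3 : y02 * y13 * y14 < 2 * (y01 * y23) * y14 := mul_lt_mul_of_pos_right g1 p14
  have f4 : (y01 * y24) * y13 < (y02 * y14) * y13 := mul_lt_mul_of_pos_right f2 p13
  have f5 : y01 * (2 * (y23 * y14)) < y01 * (y24 * y13) := mul_lt_mul_of_pos_left f1 p01
  linarith

/-! ### Stretched sequences in general position -/

/-- Ramsey selection: from a long sequence of vectors with nonvanishing determinants one can extract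
a sequence of length `N` on which a form `ω` (the determinant up to sign) is positive and all
cross-ratios are at least `2`. The homogeneous value of the second colouring is the good one by
`exists_good`. -/
theorem exists_homogeneous (d N : ℕ) : ∃ L, ∀ q : ℕ → Fin (d + 1) → ℝ,
    (∀ g : Fin (d + 1) → ℕ, StrictMono g → (∀ r, g r < L) →
      Matrix.detRowAlternating (fun r => q (g r)) ≠ 0) →
    ∃ f : ℕ → ℕ, (∀ i j, i < j → j < N → f i < f j) ∧ (∀ i < N, f i < L) ∧
      ∃ ω : (Fin (d + 1) → ℝ) [⋀^Fin (d + 1)]→ₗ[ℝ] ℝ,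
        (∀ g : Fin (d + 1) → ℕ, StrictMono g → (∀ r, g r < N) → 0 < ω (fun r => q (f (g r)))) ∧
        ∀ (i : Fin d) (H : ℕ → ℕ), (∀ s t, s < t → t < d + 3 → H s < H t) →
          (∀ t < d + 3, H t < N) → Good ω i (fun t => q (f (H t))) := by
  classical
  obtain ⟨L2, h2⟩ := ramsey_seq (Fin d → Bool) (d + 3) (max N (d + 4))
  obtain ⟨L, h1⟩ := ramsey_seq Bool (d + 1) L2
  refine ⟨L, fun q hq => ?_⟩
  obtain ⟨f1, hf1, hf1L, a, ha⟩ := h1 fun g =>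
    decide (0 < Matrix.detRowAlternating (fun r => q (g r)))
  have hω : ∃ ω : (Fin (d + 1) → ℝ) [⋀^Fin (d + 1)]→ₗ[ℝ] ℝ,
      ∀ g : Fin (d + 1) → ℕ, StrictMono g → (∀ r, g r < L2) → 0 < ω (fun r => q (f1 (g r))) := by
    cases a with
    | true =>
      refine ⟨Matrix.detRowAlternating, fun g hg hgL => ?_⟩
      exact of_decide_eq_true (ha g hg hgL)
    | false =>
      refine ⟨-Matrix.detRowAlternating, fun g hg hgL => ?_⟩
      have h3 := of_decide_eq_false (ha g hg hgL)
      have h4 := hq (f1 ∘ g) (fun s t hst => hf1 _ _ (hg hst) (hgL t)) (fun r => hf1L _ (hgL r))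
      rw [AlternatingMap.neg_apply, neg_pos]
      exact lt_of_le_of_ne (not_lt.mp h3) h4
  obtain ⟨ω, hω⟩ := hω
  obtain ⟨f2, hf2, hf2L, b, hb⟩ := h2 fun h =>
    fun i => decide (Good ω i (fun t => q (f1 (h (Fin.ofNat (d + 3) t)))))
  have hpos : ∀ g : Fin (d + 1) → ℕ, StrictMono g → (∀ r, g r < max N (d + 4)) →
      0 < ω (fun r => q (f1 (f2 (g r)))) := fun g hg hgN =>
    hω (f2 ∘ g) (fun s t hst => hf2 _ _ (hg hst) (hgN t)) (fun r => hf2L _ (hgN r))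
  have hcol : ∀ (i : Fin d) (H : ℕ → ℕ), (∀ s t, s < t → t < d + 3 → H s < H t) →
      (∀ t < d + 3, H t < max N (d + 4)) →
      (Good ω i (fun t => q (f1 (f2 (H t)))) ↔ b i = true) := by
    intro i H hH hHN
    have h3 := congrFun (hb (fun t => H t) (fun s t hst => hH _ _ hst t.2)
      (fun t => hHN t t.2)) i
    rw [← h3, decide_eq_true_iff]
    refine Good.congr ω i fun t ht => ?_
    simp [Fin.ofNat, Nat.mod_eq_of_lt ht]
  refine ⟨f1 ∘ f2, ?_, ?_, ω, ?_, ?_⟩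
  · intro i j hij hj
    exact hf1 _ _ (hf2 _ _ hij (lt_max_of_lt_left hj)) (hf2L _ (lt_max_of_lt_left hj))
  · intro i hi
    exact hf1L _ (hf2L _ (lt_max_of_lt_left hi))
  · intro g hg hgN
    exact hpos g hg fun r => lt_max_of_lt_left (hgN r)
  · intro i H hH hHN
    refine (hcol i H hH fun t ht => lt_max_of_lt_left (hHN t ht)).mpr ?_
    obtain ⟨H', hH', hHN', hg⟩ := exists_good (P := fun t => q (f1 (f2 t))) (le_max_right N (d + 4))
      hpos i
    exact (hcol i H' hH' hHN').mp hg

/-- The frame `P 0, …, P (i - 1), P (i + e), …, P (d + e)`, made of initial and final vectors. -/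
def frame {d : ℕ} (P : ℕ → Fin (d + 1) → ℝ) (e : ℕ) (i : ℕ) : Fin (d + 1) → Fin (d + 1) → ℝ :=
  fun r => if r.1 < i then P r else P (r + e)

/-- The `i`-th coordinate functional: the bracket of `v` in slot `i` with the first `i` and the
last `d - i` of the vectors `P 0, …, P (d + e)`. -/
def ell {d : ℕ} (ω : (Fin (d + 1) → ℝ) [⋀^Fin (d + 1)]→ₗ[ℝ] ℝ) (P : ℕ → Fin (d + 1) → ℝ) (e : ℕ)
    (i : Fin (d + 1)) (v : Fin (d + 1) → ℝ) : ℝ :=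
  ω (Function.update (frame P e i) i v)

section
variable {d : ℕ} {ω : (Fin (d + 1) → ℝ) [⋀^Fin (d + 1)]→ₗ[ℝ] ℝ} {P : ℕ → Fin (d + 1) → ℝ}
  {e N : ℕ}

theorem ell_eq_mulVec (i : Fin (d + 1)) (v : Fin (d + 1) → ℝ) :
    ell ω P e i v =
      (Matrix.of fun i j => ell ω P e i (Pi.single j 1)).mulVec v i := by
  let l : (Fin (d + 1) → ℝ) →ₗ[ℝ] ℝ := ω.toMultilinearMap.toLinearMap (frame P e i) i
  have h := LinearMap.pi_apply_eq_sum_univ l v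
  show l v = ∑ j, l (Pi.single j 1) * v j
  rw [h]
  refine Finset.sum_congr rfl fun j _ => ?_
  rw [smul_eq_mul, mul_comm]
  congr 2
  ext r
  simp [Pi.single_apply, eq_comm]

/-- The matrix `ell i (P j)` is triangular. -/
theorem ell_zero {i j : Fin (d + 1)} (hij : j < i) : ell ω P e i (P j) = 0 := by
  refine ω.map_eq_zero_of_eq _ ?_ hij.ne
  rw [Function.update_of_ne hij.ne, Function.update_self]
  exact if_pos hij

theorem ell_pos
    (hpos : ∀ g : Fin (d + 1) → ℕ, StrictMono g → (∀ r, g r < N) → 0 < ω (fun r => P (g r)))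
    (hN : d + 1 + e ≤ N) {i : Fin (d + 1)} {s : ℕ} (h1 : i.1 ≤ s) (h2 : s < i.1 + 1 + e) :
    0 < ell ω P e i (P s) := by
  have := hpos (fun r => if r.1 < i.1 then r.1 else if r.1 = i.1 then s else r.1 + e) ?_ ?_
  · refine this.trans_eq ?_
    unfold ell
    congr 1
    ext r : 1
    by_cases hr : r = i
    · subst hr; simp
    · rw [Function.update_of_ne hr]
      have hr' : r.1 ≠ i.1 := fun h => hr (Fin.ext h)
      simp only [frame, if_neg hr']
      split_ifs <;> rfl
  · intro r r' hr
    have hr : r.1 < r'.1 := hr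
    dsimp only
    split_ifs <;> omega
  · intro r
    have := r.2
    have := i.2
    split_ifs <;> omega

theorem ell_castSucc (i : Fin d) (v : Fin (d + 1) → ℝ) :
    ell ω P e i.castSucc v = psi ω i (frame P e i) v (P (i + 1 + e)) := by
  have hne : i.castSucc ≠ i.succ := (Fin.castSucc_lt_succ).ne
  unfold ell psi
  congr 1
  ext r : 1
  by_cases h2 : r = i.succ
  · subst h2; simp [Function.update_of_ne hne.symm, frame]
  · rw [Function.update_of_ne h2]; rfl

theorem ell_succ (i : Fin d) (v : Fin (d + 1) → ℝ) :
    ell ω P e i.succ v = psi ω i (frame P e i) (P i) v := by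
  have hne : i.castSucc ≠ i.succ := (Fin.castSucc_lt_succ).ne
  unfold ell psi
  congr 1
  ext r : 1
  by_cases h2 : r = i.succ
  · subst h2; simp
  · rw [Function.update_of_ne h2, Function.update_of_ne h2]
    by_cases h1 : r = i.castSucc
    · subst h1; simp [frame]
    · rw [Function.update_of_ne h1]
      have hr1' : r.1 ≠ i.1 := fun h => h1 (Fin.ext h)
      simp only [frame, Fin.val_succ]
      split_ifs <;> first | rfl | omega

/-- The quotient of consecutive functionals at least doubles from `P s` to `P t`, since it changes
by a cross-ratio. -/
theorem ell_step
    (hgood : ∀ (i : Fin d) (H : ℕ → ℕ), (∀ s t, s < t → t < d + 3 → H s < H t) →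
          (∀ t < d + 3, H t < N) → Good ω i (fun t => P (H t)))
    (hN : d + 1 + e ≤ N) (i : Fin d) {s t : ℕ} (h1 : d + 1 ≤ s) (h2 : s < t) (h3 : t ≤ e) :
    2 * (ell ω P e i.succ (P s) * ell ω P e i.castSucc (P t)) ≤
      ell ω P e i.succ (P t) * ell ω P e i.castSucc (P s) := by
  have hi := i.2
  have := hgood i (fun r => if r ≤ i.1 then r else if r = i.1 + 1 then s else
      if r = i.1 + 2 then t else r - 2 + e)
    (by intro a b _ _; split_ifs <;> omega) (by intro a _; split_ifs <;> omega)
  simp only [ell_castSucc, ell_succ]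
  unfold Good at this
  dsimp only at this
  rw [if_pos (le_refl _), if_neg (by omega), if_pos rfl, if_neg (by omega), if_neg (by omega),
    if_pos rfl, if_neg (by omega), if_neg (by omega), if_neg (by omega),
    show i.1 + 3 - 2 + e = i.1 + 1 + e by omega] at this
  have hpsi : ∀ x y, psi ω i (fun r : Fin (d + 1) => if r.1 < i.1 then
      P (if r.1 ≤ i.1 then r.1 else if r.1 = i.1 + 1 then s else
        if r.1 = i.1 + 2 then t else r.1 - 2 + e)
      else P (if r.1 + 2 ≤ i.1 then r.1 + 2 else if r.1 + 2 = i.1 + 1 then s else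
        if r.1 + 2 = i.1 + 2 then t else r.1 + 2 - 2 + e)) x y = psi ω i (frame P e i) x y := by
    intro x y
    unfold psi
    congr 1
    ext r : 1
    by_cases h2 : r = i.succ
    · subst h2; simp
    · by_cases h1 : r = i.castSucc
      · subst h1; simp [Function.update_of_ne h2]
      · have hr1' : r.1 ≠ i.1 := fun h => h1 (Fin.ext h)
        have hr2' : r.1 ≠ i.1 + 1 := fun h => h2 (Fin.ext h)
        rw [Function.update_of_ne h2, Function.update_of_ne h1, Function.update_of_ne h2,
          Function.update_of_ne h1]
        simp only [frame]
        split_ifs <;> first | rfl | omega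
  simp only [hpsi] at this
  exact this

theorem ell_growth
    (hpos : ∀ g : Fin (d + 1) → ℕ, StrictMono g → (∀ r, g r < N) → 0 < ω (fun r => P (g r)))
    (hgood : ∀ (i : Fin d) (H : ℕ → ℕ), (∀ s t, s < t → t < d + 3 → H s < H t) →
          (∀ t < d + 3, H t < N) → Good ω i (fun t => P (H t)))
    (hN : d + 1 + e ≤ N) (i : Fin d) {s : ℕ} (h1 : d + 1 ≤ s) (n : ℕ) (h3 : s + n ≤ e) :
    2 ^ n * (ell ω P e i.succ (P s) * ell ω P e i.castSucc (P (s + n))) ≤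
      ell ω P e i.succ (P (s + n)) * ell ω P e i.castSucc (P s) := by
  have hi := i.2
  have pc : ∀ t, d + 1 ≤ t → t ≤ e → 0 < ell ω P e i.castSucc (P t) := fun t ht hte =>
    ell_pos hpos hN (by simp; omega) (by simp; omega)
  have ps : ∀ t, d + 1 ≤ t → t ≤ e → 0 < ell ω P e i.succ (P t) := fun t ht hte =>
    ell_pos hpos hN (by simp; omega) (by simp; omega)
  induction n with
  | zero => simp
  | succ n ih =>
    have ih := ih (by omega)
    have hs := ell_step hgood hN i (s := s + n) (t := s + (n + 1)) (by omega) (by omega) h3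
    have a1 := pc s h1 (by omega)
    have a2 := pc (s + n) (by omega) (by omega)
    have a3 := pc (s + (n + 1)) (by omega) (by omega)
    have b1 := ps s h1 (by omega)
    have b2 := ps (s + n) (by omega) (by omega)
    have b3 := ps (s + (n + 1)) (by omega) (by omega)
    have hm := mul_le_mul ih hs (by positivity) (by positivity)
    refine le_of_mul_le_mul_right ?_ (mul_pos b2 a2)
    rw [pow_succ]
    linarith

end

/-- Distinct points in general position have linearly independent homogeneous coordinates. -/
theorem det_ne_zero_of_genPos {d : ℕ} {P : Finset (Pt d)} (hP : GenPos P) (v : Fin (d + 1) → Pt d)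
    (hv : Function.Injective v) (hvP : ∀ r, v r ∈ P) :
    Matrix.detRowAlternating (fun r => lift (v r)) ≠ (0 : ℝ) := by
  classical
  have haff : AffineIndependent ℝ v := by
    have h1 := hP (Finset.univ.image v) (by
      intro x hx
      obtain ⟨r, -, rfl⟩ := Finset.mem_image.mp hx
      exact hvP r) (by
      refine Finset.card_image_le.trans ?_
      simp)
    have h2 := h1.comp_embedding (⟨fun r => ⟨v r, by simp⟩,
      fun r s h => hv (congrArg Subtype.val h)⟩ : Fin (d + 1) ↪ _)
    exact h2
  intro h0
  obtain ⟨w, hw, hw0⟩ := Matrix.exists_vecMul_eq_zero_iff.mpr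
    (show (Matrix.of fun r => lift (v r)).det = 0 from h0)
  apply hw
  ext r
  rw [affineIndependent_iff] at haff
  refine haff Finset.univ w ?_ ?_ r (Finset.mem_univ r)
  · have := congrFun hw0 0
    simpa [Matrix.vecMul, dotProduct, lift] using this
  · ext j
    have := congrFun hw0 j.succ
    simpa [Matrix.vecMul, dotProduct, lift, Finset.sum_apply] using this

/-- Every sufficiently large set in general position contains a `K`-stretched sequence of length
`N`. With `K < 2 ^ n`, the points of a Ramsey sequence are taken at distance `n + 1`, so that
doubling at every step of the sequence gives growth by the factor `K`. -/
theorem exists_stretched (d : ℕ) (K : ℝ) (N : ℕ) : ∃ C : ℕ, ∀ P : Finset (Pt d), GenPos P →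
    C ≤ P.card → ∃ p : Fin N → Pt d, Function.Injective p ∧ (∀ k, p k ∈ P) ∧ StretchedPts K p := by
  obtain ⟨n, hn⟩ := pow_unbounded_of_one_lt K (one_lt_two (α := ℝ))
  set e := d + 1 + (n + 1) * N with he
  obtain ⟨L, hL⟩ := exists_homogeneous d (d + 1 + e)
  refine ⟨L, fun P hP hcard => ?_⟩
  let q : ℕ → Pt d := fun t => if h : t < P.card then (P.equivFin.symm ⟨t, h⟩ : Pt d) else 0
  have hqP : ∀ t < L, q t ∈ P := by
    intro t ht
    simp only [q, dif_pos (ht.trans_le hcard)]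
    exact (P.equivFin.symm _).2
  have hqinj : ∀ s t, s < L → t < L → q s = q t → s = t := by
    intro s t hs ht h
    simp only [q, dif_pos (hs.trans_le hcard), dif_pos (ht.trans_le hcard)] at h
    have := P.equivFin.symm.injective (Subtype.ext h)
    exact congrArg Fin.val this
  obtain ⟨f, hf, hfL, ω, hpos, hgood⟩ := hL (fun t => lift (q t)) (by
    intro g hg hgL
    refine det_ne_zero_of_genPos hP (fun r => q (g r)) ?_ (fun r => hqP _ (hgL r))
    intro r s h
    exact hg.injective (hqinj _ _ (hgL r) (hgL s) h))
  let Y : ℕ → Fin (d + 1) → ℝ := fun t => lift (q (f t))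
  -- the first `d + 1` terms are reserved for the frames, as are the last ones
  let pos : Fin N → ℕ := fun k => d + 1 + (n + 1) * k
  have hposN : ∀ k, pos k ≤ e := by
    intro k
    have := Nat.mul_le_mul_left (n + 1) k.2.le
    simp only [pos, he]; omega
  have hpos_lt : ∀ k l : Fin N, k < l → pos k + (n + 1) ≤ pos l := by
    intro k l hkl
    have := Nat.mul_le_mul_left (n + 1) (Nat.succ_le_of_lt (Fin.lt_def.mp hkl))
    rw [Nat.mul_succ] at this
    simp only [pos]; omega
  have hfinj : ∀ s t, s < t → t < d + 1 + e → q (f s) ≠ q (f t) := by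
    intro s t hst ht h
    exact (hf s t hst ht).ne (hqinj _ _ (hfL s (hst.trans ht)) (hfL t ht) h)
  refine ⟨fun k => q (f (pos k)), ?_, ?_, ?_⟩
  · intro k l h
    rcases lt_trichotomy k l with hkl | hkl | hkl
    · have := hpos_lt k l hkl
      have := hposN l
      exact absurd h (hfinj _ _ (by omega) (by omega))
    · exact hkl
    · have := hpos_lt l k hkl
      have := hposN k
      exact absurd h.symm (hfinj _ _ (by omega) (by omega))
  · intro k
    have := hposN k
    exact hqP _ (hfL _ (by omega))
  · have hmem : ∀ k, d + 1 ≤ pos k := fun k => Nat.le_add_right _ _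
    refine ⟨Matrix.of fun i j => ell ω Y e i (Pi.single j 1),
      fun k i => if h : i < d + 1 then ell ω Y e ⟨i, h⟩ (Y (pos k)) else 0, ?_, ?_, ?_, ?_⟩
    · -- multiplied by the matrix of initial points, the matrix becomes triangular
      have htri : ((Matrix.of fun i j => ell ω Y e i (Pi.single j 1)) *
          (Matrix.of fun j r : Fin (d + 1) => Y r j)).det =
          ∏ i : Fin (d + 1), ell ω Y e i (Y i) := by
        have hent : ∀ i r : Fin (d + 1), ((Matrix.of fun i j => ell ω Y e i (Pi.single j 1)) *
          (Matrix.of fun j r : Fin (d + 1) => Y r j)) i r = ell ω Y e i (Y r) := by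
          intro i r
          rw [ell_eq_mulVec]
          rfl
        rw [Matrix.det_of_isUpperTriangular]
        · exact Finset.prod_congr rfl fun i _ => hent i i
        · intro i r hr
          rw [hent]
          exact ell_zero hr
      intro h0
      rw [Matrix.det_mul, h0, zero_mul] at htri
      have : 0 < ∏ i : Fin (d + 1), ell ω Y e i (Y i) :=
        Finset.prod_pos fun i _ => ell_pos hpos le_rfl le_rfl (by omega)
      linarith
    · intro k i
      dsimp only
      rw [dif_pos i.2]
      exact ell_eq_mulVec i _
    · intro k i hi
      have := hmem k
      have := hposN k
      rw [dif_pos hi]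
      exact ell_pos (P := Y) (ω := ω) (e := e) hpos le_rfl (by dsimp only; omega) (by dsimp only; omega)
    · intro i hi k l hkl
      have h1 := hpos_lt k l hkl
      have h2 := hposN l
      have h3 := hmem k
      have h4 := hmem l
      rw [dif_pos hi, dif_pos hi, dif_pos (by omega), dif_pos (by omega)]
      have hg := ell_growth (P := Y) (ω := ω) (e := e) hpos hgood le_rfl ⟨i, by omega⟩ (hmem k) (pos l - pos k) (by omega)
      rw [show pos k + (pos l - pos k) = pos l by omega] at hg
      refine le_trans (mul_le_mul_of_nonneg_right ?_ ?_) hg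
      · exact hn.le.trans (pow_le_pow_right₀ one_le_two (by omega))
      · refine (mul_pos (ell_pos (P := Y) (e := e) hpos le_rfl ?_ ?_) (ell_pos (P := Y) (e := e) hpos le_rfl ?_ ?_)).le <;>
          simp <;> omega

/-! ### Raising the dimension -/

/-- A common separation constant for dimensions `d` and `d + 1`. -/
theorem exists_separation (n d : ℕ) : ∃ L : ℝ, 2 ≤ L ^ 2 ∧ ∀ s ≤ n, ∀ e ≤ d,
    4 * ((s : ℝ) + 1) * 2 ^ (e + 1) ≤ L ∧ (e + 1) * ((s : ℝ) + 2) ^ (2 * e + 1) < L ^ 2 := by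
  have hn : (0 : ℝ) ≤ n := n.cast_nonneg
  have hd : (0 : ℝ) ≤ d := d.cast_nonneg
  set A : ℝ := 4 * ((n : ℝ) + 1) * 2 ^ (d + 1) with hA
  set B : ℝ := (d + 1) * ((n : ℝ) + 2) ^ (2 * d + 1) with hB
  have hA0 : 0 ≤ A := by positivity
  have hB0 : 0 ≤ B := by positivity
  refine ⟨A + B + 2, by nlinarith, fun s hs e he => ?_⟩
  have hs' : (s : ℝ) ≤ n := by exact_mod_cast hs
  have he' : (e : ℝ) ≤ d := by exact_mod_cast he
  have h1 : 4 * ((s : ℝ) + 1) * 2 ^ (e + 1) ≤ A := by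
    rw [hA]
    gcongr
    norm_num
  have h2 : (e + 1) * ((s : ℝ) + 2) ^ (2 * e + 1) ≤ B := by
    rw [hB]
    have : ((s : ℝ) + 2) ^ (2 * e + 1) ≤ ((n : ℝ) + 2) ^ (2 * d + 1) :=
      (pow_le_pow_left₀ (by positivity) (by linarith) _).trans
        (pow_le_pow_right₀ (by linarith) (by omega))
    gcongr
  exact ⟨by linarith, by nlinarith⟩

/-- The chain criterion transfers the intersection pattern of colour classes in dimension `d`
to dimension `d + 1`, after every nonempty class has received one new point. The new points
precede all old ones, in the order opposite to that of the minima of the classes. -/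
theorem transfer {n d N : ℕ} {L : ℝ}
    (hL : ∀ s ≤ n, ∀ e ≤ d + 1,
      4 * ((s : ℝ) + 1) * 2 ^ (e + 1) ≤ L ∧ (e + 1) * ((s : ℝ) + 2) ^ (2 * e + 1) < L ^ 2)
    {p : Fin N → Pt d} {p' : Fin N → Pt (d + 1)}
    (hp : StretchedPts (L ^ 2) p) (hp' : StretchedPts (L ^ 2) p')
    {Q Q' : Fin n → Finset (Fin N)} {v w : Fin n → Fin N}
    (hdisj : ∀ a b, a ≠ b → Disjoint (Q a) (Q b))
    (hdisj' : ∀ a b, a ≠ b → Disjoint (Q' a) (Q' b))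
    (hw : ∀ a, (Q a).Nonempty → w a ∈ Q a ∧ ∀ l ∈ Q a, w a ≤ l)
    (hQ : ∀ a, (Q a).Nonempty → Q' a = insert (v a) (Q a))
    (hQ0 : ∀ a, ¬ (Q a).Nonempty → Q' a = ∅)
    (hv : ∀ a b, (Q a).Nonempty → ∀ l ∈ Q b, v a < l)
    (hvw : ∀ a b, v b < v a → w a < w b) (σ : Finset (Fin n)) :
    (⋂ c ∈ σ, convexHull ℝ (p' '' (Q' c : Set (Fin N)))).Nonempty ↔
      (⋂ c ∈ σ, convexHull ℝ (p '' (Q c : Set (Fin N)))).Nonempty := by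
  have hne : ∀ a, (Q' a).Nonempty ↔ (Q a).Nonempty := by
    intro a
    by_cases h : (Q a).Nonempty
    · simp [hQ a h, h]
    · simp [hQ0 a h, h]
  by_cases hall : ∀ a ∈ σ, (Q a).Nonempty
  · have hcard : σ.card ≤ n := by simpa using Finset.card_le_univ σ
    rcases lt_or_ge σ.card 2 with h2 | h2
    · rcases Nat.lt_or_ge σ.card 1 with h1 | h1
      · have : σ = ∅ := Finset.card_eq_zero.mp (by omega)
        subst this
        simp
      · obtain ⟨a, rfl⟩ := Finset.card_eq_one.mp (by omega : σ.card = 1)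
        simp [hne]
    · obtain ⟨hL1, hL3⟩ := hL _ hcard d (by omega)
      obtain ⟨hL4, hL5⟩ := hL _ hcard (d + 1) le_rfl
      rw [hulls_meet_iff hp h2 hdisj hL1 le_rfl hL3,
        hulls_meet_iff hp' h2 hdisj' hL4 le_rfl hL5]
      exact ch_prepend h2 hdisj (fun a ha => (hw a (hall a ha)).1)
        (fun a ha => (hw a (hall a ha)).2) (fun a ha => hQ a (hall a ha))
        (fun a ha b _ => hv a b (hall a ha)) (fun a _ b _ => hvw a b) d
  · push Not at hall
    obtain ⟨a, ha, hQa⟩ := hall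
    have hQ'a : Q' a = ∅ := hQ0 a (by simp [hQa])
    constructor
    · rintro ⟨x, hx⟩
      have := Set.mem_iInter₂.mp hx a ha
      simp [hQ'a] at this
    · rintro ⟨x, hx⟩
      have := Set.mem_iInter₂.mp hx a ha
      simp [hQa] at this

theorem statement16 (n d : ℕ) (hd : 1 ≤ d) (Δ : Set (Finset (Fin n)))
    (hΔ : ∀ σ ∈ Δ, ∀ τ ⊆ σ, τ ∈ Δ) (h : WeaklyTverberg d Δ) :
    WeaklyTverberg (d + 1) Δ := by
  classical
  obtain ⟨C, hC1, hC⟩ : ∃ C : ℕ, 1 ≤ C ∧ ∀ P : Finset (Pt d), GenPos P → C ≤ P.card →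
      ∃ Q : Fin n → Finset (Pt d), (∀ i, Q i ⊆ P) ∧ Induces Δ Q := by
    obtain ⟨C, hC⟩ := h
    exact ⟨C + 1, by omega, fun P hP hPC => hC P hP (by omega)⟩
  obtain ⟨L, hL2, hL⟩ := exists_separation n (d + 1)
  -- the lower half of the `2 * C` indices is kept free for the prepended points
  obtain ⟨p₀, hp₀inj, hp₀gen, hp₀⟩ := exists_moment d hd hL2 (C + C)
  obtain ⟨C', hC'⟩ := exists_stretched (d + 1) (L ^ 2) (C + C)
  let I : Finset (Fin (C + C)) := Finset.univ.image (Fin.natAdd C)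
  have hI : ∀ k ∈ I, C ≤ (k : ℕ) := by
    intro k hk
    obtain ⟨j, -, rfl⟩ := Finset.mem_image.mp hk
    simp
  have hIcard : I.card = C := by
    rw [Finset.card_image_of_injective _ (Fin.natAdd_injective _ _)]; simp
  obtain ⟨Q₀, hQ₀, hQ₀disj, hQ₀ind⟩ := hC (I.image p₀)
    (hp₀gen _ fun q hq => by
      obtain ⟨k, -, rfl⟩ := Finset.mem_image.mp hq
      exact ⟨k, rfl⟩)
    (by rw [Finset.card_image_of_injective _ hp₀inj, hIcard])
  let Q : Fin n → Finset (Fin (C + C)) := fun a => I.filter fun k => p₀ k ∈ Q₀ a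
  have hQim : ∀ a, p₀ '' (Q a : Set (Fin (C + C))) = Q₀ a := by
    intro a
    ext x
    constructor
    · rintro ⟨k, hk, rfl⟩
      exact (Finset.mem_filter.mp hk).2
    · intro hx
      obtain ⟨k, hk, rfl⟩ := Finset.mem_image.mp (hQ₀ a hx)
      exact ⟨k, Finset.mem_filter.mpr ⟨hk, hx⟩, rfl⟩
  have hQdisj : ∀ a b, a ≠ b → Disjoint (Q a) (Q b) := by
    intro a b hab
    refine Finset.disjoint_left.mpr fun k hka hkb => ?_
    exact Finset.disjoint_left.mp (hQ₀disj a b hab) (Finset.mem_filter.mp hka).2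
      (Finset.mem_filter.mp hkb).2
  have hQge : ∀ a, ∀ k ∈ Q a, C ≤ (k : ℕ) := fun a k hk => hI k (Finset.mem_filter.mp hk).1
  refine ⟨C', fun P hP hPC => ?_⟩
  obtain ⟨p, hpinj, hpP, hp⟩ := hC' P hP hPC
  have : NeZero (C + C) := ⟨by omega⟩
  let w : Fin n → Fin (C + C) := fun a => if h : (Q a).Nonempty then (Q a).min' h else 0
  let v : Fin n → Fin (C + C) := fun a => (w a).rev
  have hw : ∀ a, (Q a).Nonempty → w a ∈ Q a ∧ ∀ l ∈ Q a, w a ≤ l := by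
    intro a ha
    simp only [w, dif_pos ha]
    exact ⟨Finset.min'_mem _ _, fun l hl => Finset.min'_le _ _ hl⟩
  have hvlt : ∀ a, (Q a).Nonempty → (v a : ℕ) < C := by
    intro a ha
    have := hQge a _ (hw a ha).1
    simp only [v, Fin.val_rev]
    omega
  let Q' : Fin n → Finset (Fin (C + C)) := fun a =>
    if (Q a).Nonempty then insert (v a) (Q a) else ∅
  have hQ'mem : ∀ a k, k ∈ Q' a → (Q a).Nonempty ∧ (k = v a ∨ k ∈ Q a) := by
    intro a k hk
    by_cases ha : (Q a).Nonempty
    · simp only [Q', if_pos ha] at hk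
      exact ⟨ha, Finset.mem_insert.mp hk⟩
    · simp [Q', if_neg ha] at hk
  have hQ'disj : ∀ a b, a ≠ b → Disjoint (Q' a) (Q' b) := by
    intro a b hab
    refine Finset.disjoint_left.mpr fun k hka hkb => ?_
    obtain ⟨ha, rfl | hka⟩ := hQ'mem a k hka <;> obtain ⟨hb, hkb⟩ := hQ'mem b _ hkb
    · rcases hkb with hkb | hkb
      · have hww : w a = w b := Fin.rev_injective hkb
        exact Finset.disjoint_left.mp (hQdisj a b hab) (hw a ha).1 (hww ▸ (hw b hb).1)
      · exact absurd (hQge b _ hkb) (by have := hvlt a ha; omega)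
    · rcases hkb with rfl | hkb
      · exact absurd (hQge a _ hka) (by have := hvlt b hb; omega)
      · exact Finset.disjoint_left.mp (hQdisj a b hab) hka hkb
  refine ⟨fun a => (Q' a).image p, fun a => ?_, fun a b hab => ?_, fun σ => ?_⟩
  · intro x hx
    obtain ⟨k, -, rfl⟩ := Finset.mem_image.mp hx
    exact hpP k
  · exact (Finset.disjoint_image hpinj).mpr (hQ'disj a b hab)
  · rw [← hQ₀ind σ]
    simp only [Finset.coe_image, ← hQim]
    refine transfer hL hp₀ hp hQdisj hQ'disj hw (v := v) ?_ ?_ ?_ ?_ σ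
    · intro a ha; simp only [Q', if_pos ha]
    · intro a ha; simp only [Q', if_neg ha]
    · intro a b ha l hl
      exact Fin.lt_def.mpr ((hvlt a ha).trans_le (hQge b l hl))
    · intro a b hab
      exact Fin.rev_lt_rev.mp hab
end
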